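/- arXiv:2012.11902 — 2 statements merged into one kernel-verified Lean document; each statement's English description precedes it below -/
import Mathlib

section
/- Let f:X→Y be a subexponentially distorted embedding between geodesic metric spaces, and suppose Y is hyperbolic relative to a collection of subsets 𝒫. Then there exists ρ₀≥0 so that for every ρ≥ρ₀, the space X is hyperbolic relative to the collection of subsets {f^{−1}(N_ρ(P))}_{P∈𝒫}. -/
noncomputable section

open Metric Set Filter

namespace RelHypPaper

/-! ## Coarse maps between metric spaces -/

section CoarseMaps

variable {X : Type*} {X' : Type*} [PseudoMetricSpace X] [PseudoMetricSpace X']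

/-- `f` is coarsely Lipschitz with constant `C`. -/
def CoarseLipschitzWith (C : ℝ) (f : X → X') : Prop :=
  ∀ x y : X, dist (f x) (f y) ≤ C * dist x y + C

def CoarselyLipschitz (f : X → X') : Prop :=
  ∃ C : ℝ, 0 < C ∧ CoarseLipschitzWith C f

/-- `f` is `τ`-uniformly proper. -/
def UniformlyProperWith (τ : ℝ → ℝ) (f : X → X') : Prop :=
  CoarselyLipschitz f ∧ Filter.Tendsto τ Filter.atTop Filter.atTop ∧
    ∀ x y : X, τ (dist x y) ≤ dist (f x) (f y)

/-- quasi-isometric embedding with constants `Λ, μ`. -/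
def QIEmbeddingWith (Λ μ : ℝ) (f : X → X') : Prop :=
  ∀ x y : X, dist x y / Λ - μ ≤ dist (f x) (f y) ∧ dist (f x) (f y) ≤ Λ * dist x y + μ

def QIEmbedding (f : X → X') : Prop :=
  ∃ Λ μ : ℝ, 1 ≤ Λ ∧ 0 ≤ μ ∧ QIEmbeddingWith Λ μ f

/-- `s` is `μ`-coarsely dense. -/
def CoarselyDense (μ : ℝ) (s : Set X) : Prop :=
  ∀ x : X, ∃ y ∈ s, dist x y ≤ μ

/-- `f` is a quasi-isometry: a quasi-isometric embedding with coarsely dense image. -/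
def QuasiIsometry (f : X → X') : Prop :=
  ∃ Λ μ : ℝ, 1 ≤ Λ ∧ 0 ≤ μ ∧ QIEmbeddingWith Λ μ f ∧ CoarselyDense μ (Set.range f)

/-- polynomially distorted map: coarsely Lipschitz with lower bound `d^α - C`. -/
def PolynomiallyDistorted (f : X → X') : Prop :=
  CoarselyLipschitz f ∧ ∃ α C : ℝ, α ∈ Set.Ioc (0:ℝ) 1 ∧ 0 < C ∧
    ∀ x y : X, dist x y ^ α - C ≤ dist (f x) (f y)

/-- subexponentially distorted map. -/
def SubexponentiallyDistorted (f : X → X') : Prop :=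
  CoarselyLipschitz f ∧ ∃ τ : ℝ → ℝ,
    Filter.Tendsto (fun t => τ t / Real.log t) Filter.atTop Filter.atTop ∧
    ∀ x y : X, τ (dist x y) ≤ dist (f x) (f y)

end CoarseMaps

/-! ## Geodesics, Gromov hyperbolicity, rays -/

section Geodesics

variable {X : Type*} [PseudoMetricSpace X]

/-- `γ` is a unit-speed geodesic from `x` to `y`, parametrised on `[0, dist x y]`. -/
def IsGeodesicFrom (γ : ℝ → X) (x y : X) : Prop :=
  γ 0 = x ∧ γ (dist x y) = y ∧
    ∀ s ∈ Set.Icc (0:ℝ) (dist x y), ∀ t ∈ Set.Icc (0:ℝ) (dist x y),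
      dist (γ s) (γ t) = |s - t|

/-- a geodesic metric space. -/
class GeodesicSpace (Y : Type*) [PseudoMetricSpace Y] : Prop where
  exists_geod : ∀ x y : Y, ∃ γ : ℝ → Y, IsGeodesicFrom γ x y

/-- the Gromov product of `x` and `y` at `o`. -/
def gromovProd (o x y : X) : ℝ := (dist o x + dist o y - dist x y) / 2

/-- `δ`-hyperbolicity (four point condition). -/
def GromovHyperbolicWith (δ : ℝ) (Y : Type*) [PseudoMetricSpace Y] : Prop :=
  ∀ o x y z : Y, min (gromovProd o x y) (gromovProd o y z) - δ ≤ gromovProd o x z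

def GromovHyperbolic (Y : Type*) [PseudoMetricSpace Y] : Prop :=
  ∃ δ : ℝ, 0 ≤ δ ∧ GromovHyperbolicWith δ Y

/-- a unit speed geodesic ray based at `o`. -/
def GeodesicRay (o : X) (γ : ℝ → X) : Prop :=
  γ 0 = o ∧ ∀ s t : ℝ, 0 ≤ s → 0 ≤ t → dist (γ s) (γ t) = |s - t|

/-- a bi-infinite unit speed geodesic. -/
def IsGeodesicLine (ℓ : ℝ → X) : Prop :=
  ∀ s t : ℝ, dist (ℓ s) (ℓ t) = |s - t|

/-- the image of `γ₁` on `[0,∞)` lies within distance `C` of that of `γ₂`. -/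
def WithinOf (C : ℝ) (γ₁ γ₂ : ℝ → X) : Prop :=
  ∀ t : ℝ, 0 ≤ t → ∃ s : ℝ, 0 ≤ s ∧ dist (γ₁ t) (γ₂ s) ≤ C

/-- two rays converge to the same point at infinity: their images on `[0,∞)`
are at finite Hausdorff distance. -/
def SameEndpoint (γ₁ γ₂ : ℝ → X) : Prop :=
  ∃ C : ℝ, WithinOf C γ₁ γ₂ ∧ WithinOf C γ₂ γ₁

/-- the Gromov product at `o` of the endpoints at infinity of two rays. -/
def rayProd (o : X) (γ₁ γ₂ : ℝ → X) : ℝ :=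
  Filter.liminf (fun t => gromovProd o (γ₁ t) (γ₂ t)) Filter.atTop

/-- a hyperbolic space is visual if every point is uniformly close to a
geodesic ray from the basepoint. -/
def Visual (Y : Type*) [PseudoMetricSpace Y] : Prop :=
  ∀ w : Y, ∃ C : ℝ, 0 ≤ C ∧ ∀ x : Y, ∃ γ : ℝ → Y, GeodesicRay w γ ∧
    ∃ t : ℝ, 0 ≤ t ∧ dist x (γ t) ≤ C

end Geodesics

/-! ## Boundaries at infinity with visual metrics -/

/-- A realisation of the Gromov boundary of `Y`, with a visual metric of
parameter `ε` based at `o`: a metric space `Z` together with an assignment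
`β` of boundary points to geodesic rays from `o`, which is surjective,
identifies exactly asymptotic rays, and whose metric is comparable to
`exp (-ε ·(Gromov product))`. -/
structure VisualBoundary (Y : Type*) [MetricSpace Y] where
  Z : Type*
  [metZ : MetricSpace Z]
  o : Y
  ε : ℝ
  C₀ : ℝ
  hε : 0 < ε
  hC₀ : 1 ≤ C₀
  β : (ℝ → Y) → Z
  surj : ∀ z : Z, ∃ γ : ℝ → Y, GeodesicRay o γ ∧ β γ = z
  eq_iff : ∀ γ₁ γ₂ : ℝ → Y, GeodesicRay o γ₁ → GeodesicRay o γ₂ →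
    (β γ₁ = β γ₂ ↔ SameEndpoint γ₁ γ₂)
  visual_le : ∀ γ₁ γ₂ : ℝ → Y, GeodesicRay o γ₁ → GeodesicRay o γ₂ →
    ¬ SameEndpoint γ₁ γ₂ →
    dist (β γ₁) (β γ₂) ≤ C₀ * Real.exp (-ε * rayProd o γ₁ γ₂)
  visual_ge : ∀ γ₁ γ₂ : ℝ → Y, GeodesicRay o γ₁ → GeodesicRay o γ₂ →
    ¬ SameEndpoint γ₁ γ₂ →
    Real.exp (-ε * rayProd o γ₁ γ₂) ≤ C₀ * dist (β γ₁) (β γ₂)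

attribute [instance] VisualBoundary.metZ

/-- `h` is the boundary map induced by `F`: the `F`-image of a ray representing
a boundary point `z` stays within bounded distance of any ray representing `h z`. -/
def InducesOnBoundary {Y Y' : Type*} [MetricSpace Y] [MetricSpace Y']
    (V : VisualBoundary Y) (V' : VisualBoundary Y') (F : Y → Y') (h : V.Z → V'.Z) : Prop :=
  ∀ γ γ' : ℝ → _, GeodesicRay V.o γ → GeodesicRay V'.o γ' → V'.β γ' = h (V.β γ) →
    ∃ C : ℝ, WithinOf C (fun t => F (γ t)) γ'

end RelHypPaper

namespace RelHypPaper

/-! ## Druțu's characterisation of relative hyperbolicity -/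

/-- a continuous `(1,c)`-quasi-geodesic path defined on `[a,b]`. -/
def QGeodPath {X : Type*} [MetricSpace X] (c a b : ℝ) (γ : ℝ → X) : Prop :=
  ContinuousOn γ (Set.Icc a b) ∧ ∀ s ∈ Set.Icc a b, ∀ t ∈ Set.Icc a b,
    |s - t| - c ≤ dist (γ s) (γ t) ∧ dist (γ s) (γ t) ≤ |s - t| + c

/-- the entrance time of the path `γ : [a,b] → X` into the set `A`. -/
def entryTime {X : Type*} [MetricSpace X] (γ : ℝ → X) (a b : ℝ) (A : Set X) : ℝ :=
  sInf {t ∈ Set.Icc a b | γ t ∈ A}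

/-- the exit time of the path `γ : [a,b] → X` from the set `A`. -/
def exitTime {X : Type*} [MetricSpace X] (γ : ℝ → X) (a b : ℝ) (A : Set X) : ℝ :=
  sSup {t ∈ Set.Icc a b | γ t ∈ A}

/-- Druțu's characterisation: `X` is hyperbolic relative to the collection of
peripheral subsets `P i`. -/
structure DrutuRelHyp (X : Type*) [MetricSpace X] {ι : Type*} (P : ι → Set X) : Prop where
  /-- distinct peripherals have uniformly bounded coarse intersections -/
  bdd_intersections : ∀ K : ℝ, 0 < K → ∃ B : ℝ, 0 ≤ B ∧ ∀ i j : ι, P i ≠ P j →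
    EMetric.diam (Metric.cthickening K (P i) ∩ Metric.cthickening K (P j)) ≤
      ENNReal.ofReal B
  /-- geodesics between points near a peripheral set pass near it -/
  geod_near : ∃ ε : ℝ, ε ∈ Set.Ioo (0:ℝ) (1/2) ∧ ∃ M : ℝ, 0 ≤ M ∧
    ∀ i : ι, ∀ x y : X, x ∈ Metric.cthickening (ε * dist x y) (P i) →
      y ∈ Metric.cthickening (ε * dist x y) (P i) →
      ∀ γ : ℝ → X, IsGeodesicFrom γ x y →
        ∃ t ∈ Set.Icc (0:ℝ) (dist x y), γ t ∈ Metric.cthickening M (P i)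
  /-- quasi-geodesic triangles are either `δ`-centred or `P`-centred -/
  thin_triangles : ∀ c : ℝ, 0 ≤ c → ∃ σ δ : ℝ, 0 ≤ σ ∧ 0 ≤ δ ∧
    ∀ (x y z : X) (b₁ b₂ b₃ : ℝ) (γ₁ γ₂ γ₃ : ℝ → X),
      0 ≤ b₁ → 0 ≤ b₂ → 0 ≤ b₃ →
      QGeodPath c 0 b₁ γ₁ → QGeodPath c 0 b₂ γ₂ → QGeodPath c 0 b₃ γ₃ →
      γ₁ 0 = x → γ₁ b₁ = y → γ₂ 0 = y → γ₂ b₂ = z → γ₃ 0 = z → γ₃ b₃ = x →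
      -- (1) a ball of radius δ meets all three sides, or
      (∃ w : X, (∃ t ∈ Set.Icc (0:ℝ) b₁, dist w (γ₁ t) ≤ δ) ∧
        (∃ t ∈ Set.Icc (0:ℝ) b₂, dist w (γ₂ t) ≤ δ) ∧
        (∃ t ∈ Set.Icc (0:ℝ) b₃, dist w (γ₃ t) ≤ δ)) ∨
      -- (2) the σ-neighbourhood of a peripheral set meets all three sides,
      -- with the exit point of each side δ-close to the entrance point of the next
      (∃ i : ι,
        (∃ t ∈ Set.Icc (0:ℝ) b₁, γ₁ t ∈ Metric.cthickening σ (P i)) ∧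
        (∃ t ∈ Set.Icc (0:ℝ) b₂, γ₂ t ∈ Metric.cthickening σ (P i)) ∧
        (∃ t ∈ Set.Icc (0:ℝ) b₃, γ₃ t ∈ Metric.cthickening σ (P i)) ∧
        dist (γ₁ (exitTime γ₁ 0 b₁ (Metric.cthickening σ (P i))))
             (γ₂ (entryTime γ₂ 0 b₂ (Metric.cthickening σ (P i)))) ≤ δ ∧
        dist (γ₂ (exitTime γ₂ 0 b₂ (Metric.cthickening σ (P i))))
             (γ₃ (entryTime γ₃ 0 b₃ (Metric.cthickening σ (P i)))) ≤ δ ∧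
        dist (γ₃ (exitTime γ₃ 0 b₃ (Metric.cthickening σ (P i))))
             (γ₁ (entryTime γ₁ 0 b₁ (Metric.cthickening σ (P i)))) ≤ δ)

end RelHypPaper

namespace RelHypPaper

universe u v w

/-!
The proof runs through a Morse lemma. Let `γ` be a continuous `(1, c)`-quasi-geodesic in `X` and
suppose that two geodesics of `Y` from a point `p` to the endpoints of `f ∘ γ` do not fellow travel
(relatively to the peripheral sets) far beyond distance `r` from `p`; then `f ∘ γ` passes at
distance at most `2 * r + K` from `p`. Indeed, fellow travelling up to a given distance is an
equivalence relation up to an additive error, so by repeated bisection it is destroyed along a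
chain of points of `f ∘ γ` only at a rate logarithmic in the length of the chain, while
subexponential distortion says exactly that this logarithm is negligible against the distance
between points of the image.

Consequently `f ∘ γ` passes close to the projections of its endpoints to a peripheral set whenever
these are far apart. This contraction property shows that enlarging the neighbourhood of a
peripheral set changes its preimage only by a bounded amount, and it gives Druțu's second condition
for the preimages. For a triangle in `X`, consider the images of its vertices. Either they have a
coarse centre from which the geodesics to any two of them do not fellow travel far, and the Morse
lemma brings all three sides near it; or their projections to some peripheral set are pairwise far
apart, and contraction brings all three sides near that set.
-/

section Thickenings

variable {Y : Type*} [PseudoMetricSpace Y] {A : Set Y} {x y : Y} {H H' E : ℝ}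

lemma mem_cthickening_of_mem_of_dist_le (hx : x ∈ cthickening H A) (hH : 0 ≤ H)
    (hxy : dist x y ≤ E) (hle : H + E ≤ H') : y ∈ cthickening H' A :=
  cthickening_mono (by linarith) A <|
    cthickening_cthickening_subset (dist_nonneg.trans hxy) hH A <|
      mem_cthickening_of_dist_le y x E _ hx (dist_comm y x ▸ hxy)

lemma infDist_le_of_mem_cthickening (hx : x ∈ cthickening H A) (hH : 0 ≤ H) : infDist x A ≤ H :=
  ENNReal.toReal_le_of_le_ofReal hH hx

lemma nonempty_of_mem_cthickening (hx : x ∈ cthickening H A) : A.Nonempty := by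
  rw [nonempty_iff_ne_empty]
  rintro rfl
  simp only [cthickening_empty, mem_empty_iff_false] at hx

lemma exists_dist_le_add_one_of_mem_cthickening (hx : x ∈ cthickening H A) (hH : 0 ≤ H) :
    ∃ y ∈ A, dist x y ≤ H + 1 := by
  obtain ⟨y, hy, hxy⟩ := mem_thickening_iff.1
    (cthickening_subset_thickening' (by positivity) (lt_add_one H) A hx)
  exact ⟨y, hy, hxy.le⟩

end Thickenings

section Paths

variable {X : Type*} [MetricSpace X] {γ : ℝ → X} {a b c s t : ℝ} {A : Set X}

lemma isCompact_hittingTimes (hγ : ContinuousOn γ (Icc a b)) (hA : IsClosed A) :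
    IsCompact {t ∈ Icc a b | γ t ∈ A} :=
  isCompact_Icc.of_isClosed_subset (hγ.preimage_isClosed_of_isClosed isClosed_Icc hA)
    fun _ ht => ht.1

lemma isLeast_entryTime (hγ : ContinuousOn γ (Icc a b)) (hA : IsClosed A)
    (h : ∃ t ∈ Icc a b, γ t ∈ A) : IsLeast {t ∈ Icc a b | γ t ∈ A} (entryTime γ a b A) :=
  (isCompact_hittingTimes hγ hA).isLeast_sInf h

lemma isGreatest_exitTime (hγ : ContinuousOn γ (Icc a b)) (hA : IsClosed A)
    (h : ∃ t ∈ Icc a b, γ t ∈ A) : IsGreatest {t ∈ Icc a b | γ t ∈ A} (exitTime γ a b A) :=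
  (isCompact_hittingTimes hγ hA).isGreatest_sSup h

namespace QGeodPath

lemma mono (hγ : QGeodPath c a b γ) {a' b' : ℝ} (ha : a ≤ a') (hb : b' ≤ b) :
    QGeodPath c a' b' γ :=
  ⟨hγ.1.mono (Icc_subset_Icc ha hb), fun s hs t ht =>
    hγ.2 s (Icc_subset_Icc ha hb hs) t (Icc_subset_Icc ha hb ht)⟩

lemma reverse (hγ : QGeodPath c 0 b γ) : QGeodPath c 0 b fun t => γ (b - t) := by
  have hmaps : ∀ t ∈ Icc 0 b, b - t ∈ Icc 0 b := fun t ht =>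
    ⟨by linarith [ht.2], by linarith [ht.1]⟩
  refine ⟨hγ.1.comp (by fun_prop) hmaps, fun s hs t ht => ?_⟩
  have h := hγ.2 _ (hmaps s hs) _ (hmaps t ht)
  rwa [show b - s - (b - t) = t - s by ring, abs_sub_comm] at h

lemma dist_le (hγ : QGeodPath c a b γ) (hs : a ≤ s) (hst : s ≤ t) (ht : t ≤ b) :
    dist (γ s) (γ t) ≤ t - s + c := by
  have h := (hγ.2 s ⟨hs, hst.trans ht⟩ t ⟨hs.trans hst, ht⟩).2
  rwa [abs_sub_comm, abs_of_nonneg (sub_nonneg.2 hst)] at h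

lemma le_dist (hγ : QGeodPath c a b γ) (hs : a ≤ s) (hst : s ≤ t) (ht : t ≤ b) :
    t - s - c ≤ dist (γ s) (γ t) := by
  have h := (hγ.2 s ⟨hs, hst.trans ht⟩ t ⟨hs.trans hst, ht⟩).1
  rwa [abs_sub_comm, abs_of_nonneg (sub_nonneg.2 hst)] at h

end QGeodPath

/-- `γ` is parametrised by arc length on `[a, b]` and geodesic there. In contrast to
`IsGeodesicFrom`, the parametrising interval is arbitrary, so that subpaths need no shift. -/
def GeodesicOn (γ : ℝ → X) (a b : ℝ) : Prop :=
  ∀ s ∈ Icc a b, ∀ t ∈ Icc a b, dist (γ s) (γ t) = |s - t|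

namespace GeodesicOn

lemma mono (hγ : GeodesicOn γ a b) {a' b' : ℝ} (ha : a ≤ a') (hb : b' ≤ b) :
    GeodesicOn γ a' b' := fun s hs t ht =>
  hγ s (Icc_subset_Icc ha hb hs) t (Icc_subset_Icc ha hb ht)

lemma dist_eq (hγ : GeodesicOn γ a b) (hs : a ≤ s) (hst : s ≤ t) (ht : t ≤ b) :
    dist (γ s) (γ t) = t - s := by
  rw [hγ s ⟨hs, hst.trans ht⟩ t ⟨hs.trans hst, ht⟩, abs_sub_comm, abs_of_nonneg (sub_nonneg.2 hst)]

lemma dist_eq' (hγ : GeodesicOn γ a b) (hs : a ≤ s) (hst : s ≤ t) (ht : t ≤ b) :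
    dist (γ t) (γ s) = t - s := by
  rw [dist_comm, hγ.dist_eq hs hst ht]

lemma gromovProd_eq_zero (hγ : GeodesicOn γ a b) {r : ℝ} (hr : a ≤ r) (hrs : r ≤ s) (hst : s ≤ t)
    (ht : t ≤ b) : gromovProd (γ s) (γ r) (γ t) = 0 := by
  rw [gromovProd, hγ.dist_eq' hr hrs (hst.trans ht), hγ.dist_eq (hr.trans hrs) hst ht,
    hγ.dist_eq hr (hrs.trans hst) ht]
  ring

lemma reverse (hγ : GeodesicOn γ 0 b) : GeodesicOn (fun t => γ (b - t)) 0 b := by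
  intro s hs t ht
  rw [hγ _ ⟨by linarith [hs.2], by linarith [hs.1]⟩ _ ⟨by linarith [ht.2], by linarith [ht.1]⟩,
    abs_sub_comm]
  congr 1
  ring

lemma isGeodesicFrom (hγ : GeodesicOn γ a b) (hab : a ≤ b) :
    IsGeodesicFrom (fun t => γ (a + t)) (γ a) (γ b) := by
  have hd : dist (γ a) (γ b) = b - a := hγ.dist_eq le_rfl hab le_rfl
  simp only [IsGeodesicFrom, hd, add_zero, add_sub_cancel, true_and]
  intro s hs t ht
  rw [hγ _ ⟨by linarith [hs.1], by linarith [hs.2]⟩ _ ⟨by linarith [ht.1], by linarith [ht.2]⟩,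
    add_sub_add_left_eq_sub]

lemma continuousOn (hγ : GeodesicOn γ a b) : ContinuousOn γ (Icc a b) :=
  (LipschitzOnWith.of_dist_le_mul (K := 1) fun s hs t ht => by
    rw [hγ s hs t ht, Real.dist_eq, NNReal.coe_one, one_mul]).continuousOn

lemma qGeodPath (hγ : GeodesicOn γ a b) (hc : 0 ≤ c) : QGeodPath c a b γ :=
  ⟨hγ.continuousOn, fun s hs t ht => by rw [hγ s hs t ht]; constructor <;> linarith⟩

end GeodesicOn

namespace IsGeodesicFrom

variable {x y : X}

lemma geodesicOn (hγ : IsGeodesicFrom γ x y) : GeodesicOn γ 0 (dist x y) := hγ.2.2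

lemma dist_left (hγ : IsGeodesicFrom γ x y) (ht : t ∈ Icc 0 (dist x y)) : dist x (γ t) = t := by
  have h := hγ.geodesicOn.dist_eq le_rfl ht.1 ht.2
  rwa [hγ.1, sub_zero] at h

lemma gromovProd_eq_zero (hγ : IsGeodesicFrom γ x y) (ht : t ∈ Icc 0 (dist x y)) :
    gromovProd (γ t) x y = 0 := by
  have h := hγ.geodesicOn.gromovProd_eq_zero le_rfl ht.1 ht.2 le_rfl
  rwa [hγ.1, hγ.2.1] at h

lemma dist_right (hγ : IsGeodesicFrom γ x y) (ht : t ∈ Icc 0 (dist x y)) :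
    dist (γ t) y = dist x y - t := by
  have h := hγ.geodesicOn.dist_eq ht.1 ht.2 le_rfl
  rwa [hγ.2.1] at h

end IsGeodesicFrom

end Paths

section Quasiconvexity

variable {Y : Type*} [MetricSpace Y] {A : Set Y} {γ : ℝ → Y} {ε M h a b t : ℝ}

/-- Druțu's second condition for a single set `A`: a geodesic segment whose endpoints are close to
`A` relative to its length meets the `M`-neighbourhood of `A`. -/
def GeodesicsVisit (ε M : ℝ) (A : Set Y) : Prop :=
  ∀ (γ : ℝ → Y) (a b h : ℝ), a ≤ b → GeodesicOn γ a b → h ≤ ε * (b - a) →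
    γ a ∈ cthickening h A → γ b ∈ cthickening h A → ∃ t ∈ Icc a b, γ t ∈ cthickening M A

namespace GeodesicsVisit

lemma length_lt_of_avoids (hA : GeodesicsVisit ε M A) (hε : 0 < ε) (hγ : GeodesicOn γ a b)
    (hh : 0 ≤ h) (ha : γ a ∈ cthickening h A) (hb : γ b ∈ cthickening h A)
    (havoid : ∀ t ∈ Ioo a b, γ t ∉ cthickening M A) : b - a < (h + 1) / ε + 2 := by
  by_contra! hlong
  have hlen : (h + 1) / ε ≤ b - 1 - (a + 1) := by linarith
  have hpos : 0 < (h + 1) / ε := by positivity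
  obtain ⟨t, ht, htA⟩ := hA γ (a + 1) (b - 1) (h + 1) (by linarith)
    (hγ.mono (by linarith) (by linarith)) ((div_le_iff₀' hε).1 hlen)
    (mem_cthickening_of_mem_of_dist_le ha hh
      (hγ.dist_eq le_rfl (by linarith) (by linarith)).le (by linarith))
    (mem_cthickening_of_mem_of_dist_le hb hh
      (hγ.dist_eq' (by linarith) (by linarith) le_rfl).le (by linarith))
  exact havoid t ⟨by linarith [ht.1], by linarith [ht.2]⟩ htA

lemma exists_visits_near_endpoints (hA : GeodesicsVisit ε M A) (hε : 0 < ε)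
    (hγ : GeodesicOn γ a b) (hh : 0 ≤ h) (hMh : M ≤ h) (ha : γ a ∈ cthickening h A)
    (hb : γ b ∈ cthickening h A) (hlong : (h + 1) / ε + 2 ≤ b - a) :
    (∃ s ∈ Icc a b, s ≤ a + ((h + 1) / ε + 2) ∧ γ s ∈ cthickening M A) ∧
      ∃ s ∈ Icc a b, b - ((h + 1) / ε + 2) ≤ s ∧ γ s ∈ cthickening M A := by
  have hvisit : ∃ t ∈ Icc a b, γ t ∈ cthickening M A := by
    have hpos : 0 < (h + 1) / ε := by positivity
    have hlen : h + 1 ≤ ε * (b - a) := (div_le_iff₀' hε).1 (by linarith)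
    exact hA γ a b h (by linarith) hγ (by linarith) ha hb
  obtain ⟨⟨hs, hsA⟩, hmin⟩ := isLeast_entryTime hγ.continuousOn isClosed_cthickening hvisit
  obtain ⟨⟨ht, htA⟩, hmax⟩ := isGreatest_exitTime hγ.continuousOn isClosed_cthickening hvisit
  refine ⟨⟨_, hs, ?_, hsA⟩, _, ht, ?_, htA⟩
  · have := hA.length_lt_of_avoids hε (hγ.mono le_rfl hs.2) hh ha (cthickening_mono hMh A hsA)
      fun t ht htA => ht.2.not_ge (hmin ⟨⟨ht.1.le, ht.2.le.trans hs.2⟩, htA⟩)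
    linarith
  · have := hA.length_lt_of_avoids hε (hγ.mono ht.1 le_rfl) hh (cthickening_mono hMh A htA) hb
      fun s hs hsA => hs.1.not_ge (hmax ⟨⟨ht.1.trans hs.1.le, hs.2.le⟩, hsA⟩)
    linarith

lemma mem_cthickening_of_far_from_endpoints (hA : GeodesicsVisit ε M A) (hε : 0 < ε) (hM : 0 ≤ M)
    (hγ : GeodesicOn γ a b) (hMh : M ≤ h) (ha : γ a ∈ cthickening h A)
    (hb : γ b ∈ cthickening h A) (hat : a + ((h + 1) / ε + 2) ≤ t)
    (htb : t ≤ b - ((h + 1) / ε + 2)) : γ t ∈ cthickening (M + ((M + 1) / ε + 2)) A := by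
  have hh : 0 ≤ h := hM.trans hMh
  have hpos : 0 < (h + 1) / ε := by positivity
  obtain ⟨⟨s₁, hs₁, hs₁a, hs₁A⟩, s₂, hs₂, hs₂b, hs₂A⟩ :=
    hA.exists_visits_near_endpoints hε hγ hh hMh ha hb (by linarith)
  have hleft := hγ.mono le_rfl (show t ≤ b by linarith)
  have hright := hγ.mono (show a ≤ t by linarith) le_rfl
  obtain ⟨⟨hl, hlA⟩, hmax⟩ := isGreatest_exitTime hleft.continuousOn isClosed_cthickening
    ⟨s₁, ⟨hs₁.1, by linarith⟩, hs₁A⟩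
  obtain ⟨⟨hr, hrA⟩, hmin⟩ := isLeast_entryTime hright.continuousOn isClosed_cthickening
    ⟨s₂, ⟨by linarith, hs₂.2⟩, hs₂A⟩
  set l := exitTime γ a t (cthickening M A)
  set r := entryTime γ t b (cthickening M A)
  have hgap : r - l < (M + 1) / ε + 2 := by
    refine hA.length_lt_of_avoids hε (hγ.mono hl.1 hr.2) hM hlA hrA fun s hs hsA => ?_
    rcases le_total s t with hst | hts
    · exact hs.1.not_ge (hmax ⟨⟨hl.1.trans hs.1.le, hst⟩, hsA⟩)
    · exact hs.2.not_ge (hmin ⟨⟨hts, hs.2.le.trans hr.2⟩, hsA⟩)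
  exact mem_cthickening_of_mem_of_dist_le hlA hM (hleft.dist_eq hl.1 hl.2 le_rfl).le
    (by linarith [hr.1])

end GeodesicsVisit

end Quasiconvexity

namespace DrutuRelHyp

variable {Y : Type*} [MetricSpace Y] {ι : Type*} {P : ι → Set Y}

lemma exists_dist_le_of_mem_inter (hY : DrutuRelHyp Y P) (K : ℝ) : ∃ B ≥ 0, ∀ i j, P i ≠ P j →
    ∀ x ∈ cthickening K (P i) ∩ cthickening K (P j),
      ∀ y ∈ cthickening K (P i) ∩ cthickening K (P j), dist x y ≤ B := by
  obtain ⟨B, hB, h⟩ := hY.bdd_intersections (max K 1) (by positivity)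
  refine ⟨B, hB, fun i j hij x hx y hy => ?_⟩
  have hsub := inter_subset_inter (cthickening_mono (le_max_left K 1) (P i))
    (cthickening_mono (le_max_left K 1) (P j))
  have hxy := (edist_le_ediam_of_mem (hsub hx) (hsub hy)).trans (h i j hij)
  rwa [edist_dist, ENNReal.ofReal_le_ofReal_iff hB] at hxy

lemma exists_geodesicsVisit (hY : DrutuRelHyp Y P) :
    ∃ ε > 0, ∃ M ≥ 0, ∀ i, GeodesicsVisit ε M (P i) := by
  obtain ⟨ε, hε, M, hM, h⟩ := hY.geod_near
  refine ⟨ε, hε.1, M, hM, fun i γ a b r hab hγ hr ha hb => ?_⟩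
  have hd : dist (γ a) (γ b) = b - a := hγ.dist_eq le_rfl hab le_rfl
  rw [← hd] at hr
  obtain ⟨t, ht, htP⟩ := h i (γ a) (γ b) (cthickening_mono hr _ ha) (cthickening_mono hr _ hb) _
    (hγ.isGeodesicFrom hab)
  rw [hd] at ht
  exact ⟨a + t, ⟨by linarith [ht.1], by linarith [ht.2]⟩, htP⟩

/-- The neighbourhood in which the middle part of the geodesic lies does not depend on `H`. -/
lemma exists_deep_quasiconvex (hY : DrutuRelHyp Y P) : ∃ D ≥ 0, ∀ H, ∃ R ≥ 0, ∀ i γ a b,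
    GeodesicOn γ a b → γ a ∈ cthickening H (P i) → γ b ∈ cthickening H (P i) →
      ∀ t, a + R ≤ t → t ≤ b - R → γ t ∈ cthickening D (P i) := by
  obtain ⟨ε, hε, M, hM, h⟩ := hY.exists_geodesicsVisit
  refine ⟨M + ((M + 1) / ε + 2), by positivity, fun H => ⟨(max H M + 1) / ε + 2, by positivity, ?_⟩⟩
  exact fun i γ a b hγ ha hb t hat htb => (h i).mem_cthickening_of_far_from_endpoints hε hM hγ
    (le_max_right H M) (cthickening_mono (le_max_left H M) _ ha)
    (cthickening_mono (le_max_left H M) _ hb) hat htb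

lemma exists_quasiconvex (hY : DrutuRelHyp Y P) {H : ℝ} (hH : 0 ≤ H) : ∃ H' ≥ H, ∀ i γ a b,
    GeodesicOn γ a b → γ a ∈ cthickening H (P i) → γ b ∈ cthickening H (P i) →
      ∀ t ∈ Icc a b, γ t ∈ cthickening H' (P i) := by
  obtain ⟨D, -, hdeep⟩ := hY.exists_deep_quasiconvex
  obtain ⟨R, hR, hdeep⟩ := hdeep H
  refine ⟨max D (H + R), le_max_of_le_right (by linarith), fun i γ a b hγ ha hb t ht => ?_⟩
  rcases le_total t (a + R) with hta | hat
  · exact mem_cthickening_of_mem_of_dist_le ha hH (E := R)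
      (by rw [hγ.dist_eq le_rfl ht.1 ht.2]; linarith) (le_max_right D _)
  rcases le_total (b - R) t with hbt | htb
  · exact mem_cthickening_of_mem_of_dist_le hb hH (E := R)
      (by rw [hγ.dist_eq' ht.1 ht.2 le_rfl]; linarith) (le_max_right D _)
  · exact cthickening_mono (le_max_left D _) _ (hdeep i γ a b hγ ha hb t hat htb)

end DrutuRelHyp

section CoarseProjections

variable {Y : Type*} [MetricSpace Y] {A : Set Y} {γ : ℝ → Y} {x y z p q : Y} {E F H : ℝ}

/-- `p` is a nearest point of `A` to `x` up to the additive error `E`. -/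
def IsCoarseProj (A : Set Y) (E : ℝ) (x p : Y) : Prop :=
  p ∈ A ∧ dist x p ≤ infDist x A + E

lemma exists_isCoarseProj (hA : A.Nonempty) (x : Y) : ∃ p, IsCoarseProj A 1 x p := by
  obtain ⟨p, hp, hxp⟩ := (infDist_lt_iff hA).1 (lt_add_one (infDist x A))
  exact ⟨p, hp, hxp.le⟩

namespace IsCoarseProj

lemma mono (h : IsCoarseProj A E x p) (hEF : E ≤ F) : IsCoarseProj A F x p :=
  ⟨h.1, by linarith [h.2]⟩

lemma dist_le_dist_add (h : IsCoarseProj A E x p) (hq : q ∈ A) : dist x p ≤ dist x q + E :=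
  h.2.trans (by linarith [infDist_le_dist_of_mem (x := x) hq])

lemma dist_le (h : IsCoarseProj A E x p) (hH : 0 ≤ H) (hx : x ∈ cthickening H A) :
    dist x p ≤ H + E :=
  h.2.trans (by linarith [infDist_le_of_mem_cthickening hx hH])

lemma of_dist_le (h : IsCoarseProj A E x p) (hxy : dist x y ≤ F) :
    IsCoarseProj A (E + 2 * F) y p :=
  ⟨h.1, by linarith [h.2, dist_triangle_left y p x,
    infDist_le_infDist_add_dist (s := A) (x := x) (y := y)]⟩

lemma of_gromovProd_le (h : IsCoarseProj A E x p) (hy : gromovProd y x p ≤ F) :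
    IsCoarseProj A (E + 2 * F) y p := by
  simp only [gromovProd, dist_comm y x] at hy
  exact ⟨h.1, by linarith [h.2, infDist_le_infDist_add_dist (s := A) (x := x) (y := y)]⟩

end IsCoarseProj

end CoarseProjections

section Hinges

variable {Y : Type*} [MetricSpace Y] {A : Set Y} {γ η : ℝ → Y} {l m s t C C' : ℝ}

/-- Two geodesic segments, defined on `[0, l]` and `[0, m]`, issuing from a common point. -/
structure Hinge (γ : ℝ → Y) (l : ℝ) (η : ℝ → Y) (m : ℝ) : Prop where
  left_nonneg : 0 ≤ l
  right_nonneg : 0 ≤ m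
  left : GeodesicOn γ 0 l
  right : GeodesicOn η 0 m
  start_eq : γ 0 = η 0

namespace Hinge

lemma trans {ζ : ℝ → Y} {n : ℝ} (h : Hinge γ l η m) (h' : Hinge η m ζ n) : Hinge γ l ζ n :=
  ⟨h.left_nonneg, h'.right_nonneg, h.left, h'.right, h.start_eq.trans h'.start_eq⟩

lemma symm (h : Hinge γ l η m) : Hinge η m γ l :=
  ⟨h.right_nonneg, h.left_nonneg, h.right, h.left, h.start_eq.symm⟩

lemma restrict (h : Hinge γ l η m) (hs : s ∈ Icc 0 l) (ht : t ∈ Icc 0 m) : Hinge γ s η t :=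
  ⟨hs.1, ht.1, h.left.mono le_rfl hs.2, h.right.mono le_rfl ht.2, h.start_eq⟩

lemma dist_left (h : Hinge γ l η m) (hs : s ∈ Icc 0 l) : dist (γ 0) (γ s) = s := by
  rw [h.left.dist_eq le_rfl hs.1 hs.2, sub_zero]

lemma dist_right (h : Hinge γ l η m) (ht : t ∈ Icc 0 m) : dist (γ 0) (η t) = t := by
  rw [h.start_eq, h.symm.dist_left ht]

lemma le_add_dist (h : Hinge γ l η m) (hs : s ∈ Icc 0 l) (ht : t ∈ Icc 0 m) :
    s ≤ t + dist (γ s) (η t) := by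
  linarith [h.dist_left hs, h.dist_right ht, dist_triangle_right (γ 0) (γ s) (η t)]

end Hinge

lemma IsGeodesicFrom.hinge {p x y : Y} (hγ : IsGeodesicFrom γ p x) (hη : IsGeodesicFrom η p y) :
    Hinge γ (dist p x) η (dist p y) :=
  ⟨dist_nonneg, dist_nonneg, hγ.geodesicOn, hη.geodesicOn, hγ.1.trans hη.1.symm⟩

/-- The paths `γ` on `[0, l]` and `η` on `[0, m]` have points that are `C`-close to each other and
to the set `A`. -/
def MeetNear (A : Set Y) (C : ℝ) (γ : ℝ → Y) (l : ℝ) (η : ℝ → Y) (m : ℝ) : Prop :=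
  ∃ s ∈ Icc 0 l, ∃ t ∈ Icc 0 m,
    γ s ∈ cthickening C A ∧ η t ∈ cthickening C A ∧ dist (γ s) (η t) ≤ C

lemma MeetNear.mono (h : MeetNear A C γ l η m) (hC : C ≤ C') : MeetNear A C' γ l η m := by
  obtain ⟨s, hs, t, ht, hγ, hη, hd⟩ := h
  exact ⟨s, hs, t, ht, cthickening_mono hC A hγ, cthickening_mono hC A hη, hd.trans hC⟩

end Hinges

namespace DrutuRelHyp

variable {Y : Type*} [MetricSpace Y] {ι : Type*} {P : ι → Set Y}

lemma exists_thin_geodesic_triangles (hY : DrutuRelHyp Y P) : ∃ D ≥ 0, ∀ γ l η m ζ,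
    Hinge γ l η m → IsGeodesicFrom ζ (γ l) (η m) →
    (∃ s ∈ Icc 0 l, ∃ t ∈ Icc 0 m, ∃ u ∈ Icc 0 (dist (γ l) (η m)),
      dist (γ s) (η t) ≤ D ∧ dist (γ s) (ζ u) ≤ D ∧ dist (η t) (ζ u) ≤ D) ∨
    ∃ k, MeetNear (P k) D γ l η m ∧ MeetNear (P k) D γ l ζ (dist (γ l) (η m)) ∧
      MeetNear (P k) D η m ζ (dist (γ l) (η m)) := by
  obtain ⟨σ, δ, hσ, hδ, htri⟩ := hY.thin_triangles 0 le_rfl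
  refine ⟨2 * δ + σ, by positivity, fun γ l η m ζ h hζ => ?_⟩
  have hγq : QGeodPath 0 0 l γ := h.left.qGeodPath le_rfl
  have hζq : QGeodPath 0 0 (dist (γ l) (η m)) ζ := hζ.geodesicOn.qGeodPath le_rfl
  have hηq : QGeodPath 0 0 m fun t => η (m - t) := h.right.reverse.qGeodPath le_rfl
  have hflip : ∀ t ∈ Icc 0 m, m - t ∈ Icc 0 m := fun t ht =>
    ⟨by linarith [ht.2], by linarith [ht.1]⟩
  rcases htri (γ 0) (γ l) (η m) l _ m γ ζ _ h.left_nonneg dist_nonneg h.right_nonneg hγq hζq hηq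
    rfl rfl hζ.1 hζ.2.1 (by rw [sub_zero]) (by rw [sub_self, h.start_eq]) with
    ⟨w, ⟨s, hs, hws⟩, ⟨u, hu, hwu⟩, t, ht, hwt⟩ | ⟨k, hγk, hζk, hηk, hγζ, hζη, hηγ⟩
  · refine .inl ⟨s, hs, m - t, hflip t ht, u, hu, ?_, ?_, ?_⟩
    · linarith [dist_triangle_left (γ s) (η (m - t)) w]
    · linarith [dist_triangle_left (γ s) (ζ u) w]
    · linarith [dist_triangle_left (η (m - t)) (ζ u) w]
  · right
    have hsub : cthickening σ (P k) ⊆ cthickening (2 * δ + σ) (P k) :=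
      cthickening_mono (by linarith) _
    have hγin := (isLeast_entryTime hγq.1 isClosed_cthickening hγk).1
    have hγout := (isGreatest_exitTime hγq.1 isClosed_cthickening hγk).1
    have hζin := (isLeast_entryTime hζq.1 isClosed_cthickening hζk).1
    have hζout := (isGreatest_exitTime hζq.1 isClosed_cthickening hζk).1
    have hηin := (isLeast_entryTime hηq.1 isClosed_cthickening hηk).1
    have hηout := (isGreatest_exitTime hηq.1 isClosed_cthickening hηk).1
    rw [dist_comm] at hζη hηγ
    exact ⟨k,
      ⟨_, hγin.1, _, hflip _ hηout.1, hsub hγin.2, hsub hηout.2, by linarith⟩,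
      ⟨_, hγout.1, _, hζin.1, hsub hγout.2, hsub hζin.2, by linarith⟩,
      ⟨_, hflip _ hηin.1, _, hζout.1, hsub hηin.2, hsub hζout.2, by linarith⟩⟩

variable [GeodesicSpace Y]

lemma exists_meetNear (hY : DrutuRelHyp Y P) {H : ℝ} (hH : 0 ≤ H) : ∃ C ≥ H, ∀ i γ l η m,
    Hinge γ l η m → γ l ∈ cthickening H (P i) → η m ∈ cthickening H (P i) →
      MeetNear (P i) C γ l η m := by
  obtain ⟨H', hHH', hconv⟩ := hY.exists_quasiconvex hH
  obtain ⟨D, hD, htri⟩ := hY.exists_thin_geodesic_triangles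
  obtain ⟨B, hB, hinter⟩ := hY.exists_dist_le_of_mem_inter (max H' D)
  refine ⟨H' + 2 * D + B, by linarith, fun i γ l η m h hγ hη => ?_⟩
  obtain ⟨ζ, hζ⟩ := GeodesicSpace.exists_geod (γ l) (η m)
  have hζi : ∀ u ∈ Icc 0 (dist (γ l) (η m)), ζ u ∈ cthickening H' (P i) :=
    hconv i ζ _ _ hζ.geodesicOn (by rwa [hζ.1]) (by rwa [hζ.2.1])
  have near_of_near_side : ∀ x, ∀ u ∈ Icc 0 (dist (γ l) (η m)), dist x (ζ u) ≤ D →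
      x ∈ cthickening (H' + 2 * D + B) (P i) := fun x u hu hx =>
    mem_cthickening_of_mem_of_dist_le (hζi u hu) (by linarith) (dist_comm x _ ▸ hx) (by linarith)
  rcases htri γ l η m ζ h hζ with ⟨s, hs, t, ht, u, hu, hst, hsu, htu⟩ |
    ⟨k, hγη, ⟨s, hs, u, hu, -, huk, hsu⟩, t, ht, v, hv, -, hvk, htv⟩
  · exact ⟨s, hs, t, ht, near_of_near_side _ u hu hsu, near_of_near_side _ u hu htu, by linarith⟩
  · by_cases hik : P i = P k
    · rw [hik]
      exact hγη.mono (by linarith)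
    · have hmem : ∀ u ∈ Icc 0 (dist (γ l) (η m)), ζ u ∈ cthickening D (P k) →
          ζ u ∈ cthickening (max H' D) (P i) ∩ cthickening (max H' D) (P k) := fun u hu huk =>
        ⟨cthickening_mono (le_max_left _ _) _ (hζi u hu),
          cthickening_mono (le_max_right _ _) _ huk⟩
      have huv := hinter i k hik _ (hmem u hu huk) _ (hmem v hv hvk)
      refine ⟨s, hs, t, ht, near_of_near_side _ u hu hsu, near_of_near_side _ v hv htv, ?_⟩
      linarith [dist_triangle4 (γ s) (ζ u) (ζ v) (η t), dist_comm (η t) (ζ v)]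

lemma exists_dist_proj_start_le (hY : DrutuRelHyp Y P) {H E : ℝ} (hH : 0 ≤ H)
    (hE : 0 ≤ E) : ∃ C ≥ 0, ∀ i γ l q, 0 ≤ l → GeodesicOn γ 0 l → IsCoarseProj (P i) E (γ 0) q →
      γ l ∈ cthickening H (P i) → ∃ s ∈ Icc 0 l, dist (γ s) q ≤ C := by
  obtain ⟨C, hCH, hmeet⟩ := hY.exists_meetNear hH
  refine ⟨2 * C + E, by linarith, fun i γ l q hl hγ hq hlH => ?_⟩
  obtain ⟨η, hη⟩ := GeodesicSpace.exists_geod (γ 0) q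
  obtain ⟨s, hs, t, ht, -, htC, hst⟩ := hmeet i γ l η (dist (γ 0) q)
    ⟨hl, dist_nonneg, hγ, hη.geodesicOn, hη.1.symm⟩ hlH
    (by rw [hη.2.1]; exact self_subset_cthickening _ hq.1)
  have htq := (hq.of_gromovProd_le (hη.gromovProd_eq_zero ht).le).dist_le (by linarith) htC
  exact ⟨s, hs, by linarith [dist_triangle (γ s) (η t) q]⟩

lemma exists_dist_proj_end_le (hY : DrutuRelHyp Y P) {H E : ℝ} (hH : 0 ≤ H)
    (hE : 0 ≤ E) : ∃ C ≥ 0, ∀ i γ l q, 0 ≤ l → GeodesicOn γ 0 l → γ 0 ∈ cthickening H (P i) →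
      IsCoarseProj (P i) E (γ l) q → ∃ s ∈ Icc 0 l, dist (γ s) q ≤ C := by
  obtain ⟨C, hC, hproj⟩ := hY.exists_dist_proj_start_le hH hE
  refine ⟨C, hC, fun i γ l q hl hγ h0 hq => ?_⟩
  obtain ⟨s, hs, hsq⟩ := hproj i _ l q hl hγ.reverse (by rwa [sub_zero]) (by rwa [sub_self])
  exact ⟨l - s, ⟨by linarith [hs.2], by linarith [hs.1]⟩, hsq⟩

lemma exists_dist_proj_le_of_dist_le (hY : DrutuRelHyp Y P) {E F : ℝ} (hE : 0 ≤ E) (hF : 0 ≤ F) :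
    ∃ C ≥ 0, ∀ i x y p q, IsCoarseProj (P i) E x p → IsCoarseProj (P i) E y q → dist x y ≤ F →
      dist p q ≤ C := by
  obtain ⟨C, hC, hproj⟩ := hY.exists_dist_proj_start_le le_rfl hE
  refine ⟨2 * C + (E + 2 * F), by positivity, fun i x y p q hp hq hxy => ?_⟩
  have hxq : IsCoarseProj (P i) (E + 2 * F) x q := hq.of_dist_le (dist_comm x y ▸ hxy)
  obtain ⟨γ, hγ⟩ := GeodesicSpace.exists_geod x q
  obtain ⟨s, hs, hsp⟩ := hproj i γ (dist x q) p dist_nonneg hγ.geodesicOn (by rwa [hγ.1])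
    (by rw [hγ.2.1]; exact self_subset_cthickening _ hq.1)
  have hsq := (hxq.of_gromovProd_le (hγ.gromovProd_eq_zero hs).le).dist_le_dist_add hp.1
  linarith [dist_triangle_left p q (γ s)]

end DrutuRelHyp

section FellowTravelling

variable {Y : Type*} [MetricSpace Y] {ι : Type*} {P : ι → Set Y} {D D' r r' : ℝ} {x y z : Y}
  {γ η : ℝ → Y} {l m s t : ℝ}

/-- `x` and `y` are close to each other, or to a common peripheral set. -/
def RelClose (P : ι → Set Y) (D : ℝ) (x y : Y) : Prop :=
  dist x y ≤ D ∨ ∃ k, x ∈ cthickening D (P k) ∧ y ∈ cthickening D (P k)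

namespace RelClose

lemma symm (h : RelClose P D x y) : RelClose P D y x := by
  rcases h with h | ⟨k, hx, hy⟩
  · exact .inl (dist_comm x y ▸ h)
  · exact .inr ⟨k, hy, hx⟩

lemma mono (h : RelClose P D x y) (hD : D ≤ D') : RelClose P D' x y := by
  rcases h with h | ⟨k, hx, hy⟩
  · exact .inl (h.trans hD)
  · exact .inr ⟨k, cthickening_mono hD _ hx, cthickening_mono hD _ hy⟩

lemma trans_dist_le (h : RelClose P D x y) (hD : 0 ≤ D) (hyz : dist y z ≤ r) (hle : D + r ≤ D') :
    RelClose P D' x z := by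
  rcases h with h | ⟨k, hx, hy⟩
  · exact .inl (by linarith [dist_triangle x y z])
  · exact .inr ⟨k, cthickening_mono (by linarith [dist_nonneg.trans hyz]) _ hx,
      mem_cthickening_of_mem_of_dist_le hy hD hyz hle⟩

end RelClose

/-- The paths `γ` on `[0, l]` and `η` on `[0, m]` have relatively close points at times at
least `r`. For geodesics issuing from a common point `p` this plays the role of the inequality
`r ≤ (γ l | η m)_p` of Gromov hyperbolic geometry. -/
def FellowTravel (P : ι → Set Y) (D r : ℝ) (γ : ℝ → Y) (l : ℝ) (η : ℝ → Y) (m : ℝ) : Prop :=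
  ∃ s ∈ Icc 0 l, ∃ t ∈ Icc 0 m, r ≤ s ∧ r ≤ t ∧ RelClose P D (γ s) (η t)

namespace FellowTravel

lemma symm (h : FellowTravel P D r γ l η m) : FellowTravel P D r η m γ l := by
  obtain ⟨s, hs, t, ht, hrs, hrt, hst⟩ := h
  exact ⟨t, ht, s, hs, hrt, hrs, hst.symm⟩

lemma mono (h : FellowTravel P D r γ l η m) (hD : D ≤ D') (hr : r' ≤ r) :
    FellowTravel P D' r' γ l η m := by
  obtain ⟨s, hs, t, ht, hrs, hrt, hst⟩ := h
  exact ⟨s, hs, t, ht, hr.trans hrs, hr.trans hrt, hst.mono hD⟩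

lemma extend (h : FellowTravel P D r γ s η t) (hs : s ≤ l) (ht : t ≤ m) :
    FellowTravel P D r γ l η m := by
  obtain ⟨s', hs', t', ht', h⟩ := h
  exact ⟨s', ⟨hs'.1, hs'.2.trans hs⟩, t', ⟨ht'.1, ht'.2.trans ht⟩, h⟩

end FellowTravel

/-- Fellow travelling with an arbitrarily large constant `D'` implies fellow travelling with the
constant `D`, at the price of shortening the common part by an amount depending on `D'`. -/
def Absorbing (P : ι → Set Y) (D : ℝ) : Prop :=
  ∀ D', ∃ C ≥ 0, ∀ γ l η m r, Hinge γ l η m → FellowTravel P D' r γ l η m →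
    FellowTravel P D (r - C) γ l η m

/-- The endpoint of `γ`, defined on `[0, l]`, is close to `η`, defined on `[0, m]`, or it is close
to a peripheral set which `γ` and `η` approach together and which `η` is still close to at some time
after `r - C`. -/
def Tracks (P : ι → Set Y) (C r : ℝ) (γ : ℝ → Y) (l : ℝ) (η : ℝ → Y) (m : ℝ) : Prop :=
  (∃ t ∈ Icc 0 m, dist (γ l) (η t) ≤ C) ∨
    ∃ i, γ l ∈ cthickening C (P i) ∧ MeetNear (P i) C γ l η m ∧
      ∃ t ∈ Icc 0 m, r - C ≤ t ∧ η t ∈ cthickening C (P i)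

lemma Tracks.mono {C C' : ℝ} (h : Tracks P C r γ l η t) (hC : C ≤ C') (hr : r' ≤ r)
    (ht : t ≤ m) : Tracks P C' r' γ l η m := by
  rcases h with ⟨u, hu, hd⟩ | ⟨i, hi, ⟨s, hs, v, hv, h⟩, u, hu, hru, hui⟩
  · exact .inl ⟨u, ⟨hu.1, hu.2.trans ht⟩, hd.trans hC⟩
  · exact .inr ⟨i, cthickening_mono hC _ hi,
      MeetNear.mono ⟨s, hs, v, ⟨hv.1, hv.2.trans ht⟩, h⟩ hC,
      u, ⟨hu.1, hu.2.trans ht⟩, by linarith, cthickening_mono hC _ hui⟩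

end FellowTravelling

namespace DrutuRelHyp

variable {Y : Type*} [MetricSpace Y] {ι : Type*} {P : ι → Set Y} [GeodesicSpace Y]

lemma exists_fellowTravel_of_dist_le (hY : DrutuRelHyp Y P) : ∃ D ≥ 0, ∀ γ l η m r F,
    Hinge γ l η m → r ≤ l → r ≤ m → dist (γ l) (η m) ≤ F →
      FellowTravel P D (r - (F + D)) γ l η m := by
  obtain ⟨D, hD, htri⟩ := hY.exists_thin_geodesic_triangles
  refine ⟨D, hD, fun γ l η m r F h hl hm hF => ?_⟩
  obtain ⟨ζ, hζ⟩ := GeodesicSpace.exists_geod (γ l) (η m)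
  have hγ_late : ∀ s ∈ Icc 0 l, ∀ u ∈ Icc 0 (dist (γ l) (η m)), dist (γ s) (ζ u) ≤ D →
      r - (F + D) ≤ s := fun s hs u hu hsu => by
    linarith [h.left.dist_eq' hs.1 hs.2 le_rfl, dist_triangle_right (γ l) (γ s) (ζ u),
      hζ.dist_left hu, hu.2]
  have hη_late : ∀ t ∈ Icc 0 m, ∀ u ∈ Icc 0 (dist (γ l) (η m)), dist (η t) (ζ u) ≤ D →
      r - (F + D) ≤ t := fun t ht u hu htu => by
    linarith [h.right.dist_eq ht.1 ht.2 le_rfl, dist_triangle (η t) (ζ u) (η m),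
      hζ.dist_right hu, hu.1]
  rcases htri γ l η m ζ h hζ with ⟨s, hs, t, ht, u, hu, hst, hsu, htu⟩ |
    ⟨k, -, ⟨s, hs, u, hu, hsk, -, hsu⟩, t, ht, v, hv, htk, -, htv⟩
  · exact ⟨s, hs, t, ht, hγ_late s hs u hu hsu, hη_late t ht u hu htu, .inl hst⟩
  · exact ⟨s, hs, t, ht, hγ_late s hs u hu hsu, hη_late t ht v hv htv, .inr ⟨k, hsk, htk⟩⟩

lemma exists_fellowTravel_of_mem_cthickening (hY : DrutuRelHyp Y P) : ∃ D ≥ 0, ∀ H ≥ 0, ∃ C ≥ 0,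
    ∀ k γ l η m r, Hinge γ l η m → r ≤ l → r ≤ m → γ l ∈ cthickening H (P k) →
      η m ∈ cthickening H (P k) → FellowTravel P D (r - C) γ l η m := by
  obtain ⟨D₀, hD₀, hclose⟩ := hY.exists_fellowTravel_of_dist_le
  obtain ⟨D₁, -, hdeep⟩ := hY.exists_deep_quasiconvex
  refine ⟨max D₀ D₁, le_max_of_le_left hD₀, fun H hH => ?_⟩
  obtain ⟨C, hCH, hmeet⟩ := hY.exists_meetNear hH
  have hC : 0 ≤ C := hH.trans hCH
  obtain ⟨R, hR, hdeep⟩ := hdeep C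
  refine ⟨2 * R + C + (C + D₀), by positivity, fun k γ l η m r h hl hm hγ hη => ?_⟩
  obtain ⟨s, hs, t, ht, hsk, htk, hst⟩ := hmeet k γ l η m h hγ hη
  have hst' : s ≤ t + C := by linarith [h.le_add_dist hs ht]
  have hts' : t ≤ s + C := by linarith [h.symm.le_add_dist ht hs, dist_comm (γ s) (η t)]
  by_cases hlate : r - 2 * R - C ≤ s ∧ r - 2 * R - C ≤ t
  · exact ((hclose γ s η t _ C (h.restrict hs ht) hlate.1 hlate.2 hst).extend hs.2 ht.2).mono
      (le_max_left _ _) (by linarith)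
  · have hearly : s < r - 2 * R ∧ t < r - 2 * R := by
      by_contra! hnot
      exact hlate ⟨by by_contra! hs'; linarith [hnot (by linarith)],
        by by_contra! ht'; linarith [hnot (by linarith)]⟩
    have hγR := hdeep k γ s l (h.left.mono hs.1 le_rfl) hsk (cthickening_mono hCH _ hγ) (l - R)
      (by linarith) le_rfl
    have hηR := hdeep k η t m (h.right.mono ht.1 le_rfl) htk (cthickening_mono hCH _ hη) (m - R)
      (by linarith) le_rfl
    exact ⟨l - R, ⟨by linarith [hs.1], by linarith⟩, m - R, ⟨by linarith [ht.1], by linarith⟩,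
      by linarith, by linarith, .inr ⟨k, cthickening_mono (le_max_right _ _) _ hγR,
        cthickening_mono (le_max_right _ _) _ hηR⟩⟩

lemma exists_absorbing (hY : DrutuRelHyp Y P) : ∃ D ≥ 0, Absorbing P D := by
  obtain ⟨D₁, hD₁, hclose⟩ := hY.exists_fellowTravel_of_dist_le
  obtain ⟨D₂, -, hperipheral⟩ := hY.exists_fellowTravel_of_mem_cthickening
  refine ⟨max D₁ D₂, le_max_of_le_left hD₁, fun D' => ?_⟩
  obtain ⟨C, hC, hperipheral⟩ := hperipheral (max D' 0) (le_max_right _ _)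
  refine ⟨max C (max D' 0 + D₁), le_max_of_le_left hC, ?_⟩
  rintro γ l η m r h ⟨s, hs, t, ht, hrs, hrt, hst⟩
  rcases hst.mono (le_max_left D' 0) with hst | ⟨k, hsk, htk⟩
  · exact ((hclose γ s η t r _ (h.restrict hs ht) hrs hrt hst).extend hs.2 ht.2).mono
      (le_max_left _ _) (sub_le_sub_left (le_max_right C _) r)
  · exact ((hperipheral k γ s η t r (h.restrict hs ht) hrs hrt hsk htk).extend hs.2 ht.2).mono
      (le_max_right _ _) (sub_le_sub_left (le_max_left C _) r)

lemma exists_tracks_of_gromovProd_le (hY : DrutuRelHyp Y P) {E : ℝ} (hE : 0 ≤ E) : ∃ C ≥ 0,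
    ∀ γ l η m, Hinge γ l η m → gromovProd (γ l) (γ 0) (η m) ≤ E → Tracks P C l γ l η m := by
  obtain ⟨D, hD, htri⟩ := hY.exists_thin_geodesic_triangles
  refine ⟨2 * E + 2 * D, by positivity, fun γ l η m h hprod => ?_⟩
  have hl := h.dist_left ⟨h.left_nonneg, le_rfl⟩
  have hm := h.dist_right ⟨h.right_nonneg, le_rfl⟩
  rw [gromovProd, dist_comm _ (γ 0), hl, hm] at hprod
  obtain ⟨ζ, hζ⟩ := GeodesicSpace.exists_geod (γ l) (η m)
  have hnear_end : ∀ s ∈ Icc 0 l, ∀ u ∈ Icc 0 (dist (γ l) (η m)), dist (γ s) (ζ u) ≤ D →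
      dist (γ s) (γ l) ≤ 2 * E + D := fun s hs u hu hsu => by
    linarith [h.dist_left hs, h.left.dist_eq hs.1 hs.2 le_rfl, hζ.dist_right hu, hu.1,
      dist_triangle4 (γ 0) (γ s) (ζ u) (η m)]
  rcases htri γ l η m ζ h hζ with ⟨s, hs, t, ht, u, hu, hst, hsu, -⟩ |
    ⟨k, hγη, ⟨s, hs, u, hu, hsk, -, hsu⟩, t, ht, v, hv, htk, -, htv⟩
  · exact .inl ⟨t, ht, by
      linarith [dist_triangle_left (γ l) (η t) (γ s), hnear_end s hs u hu hsu]⟩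
  · refine .inr ⟨k, ?_, hγη.mono (by linarith), t, ht, ?_, cthickening_mono (by linarith) _ htk⟩
    · exact mem_cthickening_of_mem_of_dist_le hsk hD (hnear_end s hs u hu hsu) (by linarith)
    · linarith [h.dist_right ht, hζ.dist_right hv, hv.1, dist_triangle4 (γ 0) (η t) (ζ v) (η m)]

lemma exists_fellowTravel_of_ne (hY : DrutuRelHyp Y P) {C : ℝ} (hC : 0 ≤ C) : ∃ C' ≥ C,
    ∀ i k α a β b γ c t r, P i ≠ P k → Hinge α a β b → Hinge β b γ c → r ≤ a → r ≤ b →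
      α a ∈ cthickening C (P k) → β b ∈ cthickening C (P k) → β b ∈ cthickening C (P i) →
      MeetNear (P i) C β b γ c → t ∈ Icc 0 c → r - C ≤ t → γ t ∈ cthickening C (P i) →
      FellowTravel P C' (r - C') α a γ c := by
  obtain ⟨F, hCF, hmeet⟩ := hY.exists_meetNear hC
  obtain ⟨H, hFH, hconv⟩ := hY.exists_quasiconvex (hC.trans hCF)
  obtain ⟨B, hB, hinter⟩ := hY.exists_dist_le_of_mem_inter H
  refine ⟨C + F + H + B, by linarith, ?_⟩
  rintro i k α a β b γ c t r hik hαβ hβγ hra hrb hαk hβk hβi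
    ⟨s, hs, t₀, ht₀, hsi, -, hst₀⟩ ht hrt hti
  obtain ⟨u, hu, v, hv, -, hvk, huv⟩ := hmeet k α a β b hαβ hαk hβk
  have hFsub (j : ι) : cthickening C (P j) ⊆ cthickening F (P j) := cthickening_mono hCF _
  have hHsub (j : ι) : cthickening F (P j) ⊆ cthickening H (P j) := cthickening_mono hFH _
  rcases le_total s v with hsv | hvs
  · have hvi : β v ∈ cthickening H (P i) := hconv i β s b (hβγ.left.mono hs.1 le_rfl)
      (hFsub i hsi) (hFsub i hβi) v ⟨hsv, hv.2⟩
    have hvb := hinter i k hik (β v) ⟨hvi, hHsub k hvk⟩ (β b)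
      ⟨hHsub i (hFsub i hβi), hHsub k (hFsub k hβk)⟩
    rw [hβγ.left.dist_eq hv.1 hv.2 le_rfl] at hvb
    refine ⟨u, hu, t, ht, ?_, by linarith, .inr ⟨i, ?_, cthickening_mono (by linarith) _ hti⟩⟩
    · linarith [hαβ.symm.le_add_dist hv hu, dist_comm (α u) (β v)]
    · exact mem_cthickening_of_mem_of_dist_le hvi (by linarith) (dist_comm (α u) _ ▸ huv)
        (by linarith)
  · have hsk : β s ∈ cthickening H (P k) := hconv k β v b (hβγ.left.mono hv.1 le_rfl)
      hvk (hFsub k hβk) s ⟨hvs, hs.2⟩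
    have hsb := hinter i k hik (β s) ⟨hHsub i (hFsub i hsi), hsk⟩ (β b)
      ⟨hHsub i (hFsub i hβi), hHsub k (hFsub k hβk)⟩
    rw [hβγ.left.dist_eq hs.1 hs.2 le_rfl] at hsb
    refine ⟨a, ⟨hαβ.left_nonneg, le_rfl⟩, t₀, ht₀, by linarith, ?_,
      .inr ⟨k, cthickening_mono (by linarith) _ hαk, ?_⟩⟩
    · linarith [hβγ.le_add_dist hs ht₀]
    · exact mem_cthickening_of_mem_of_dist_le hsk (by linarith) hst₀ (by linarith)

lemma exists_fellowTravel_of_tracks (hY : DrutuRelHyp Y P) {C : ℝ} (hC : 0 ≤ C) : ∃ C' ≥ 0,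
    ∀ α a β b γ c r, Hinge α a β b → Hinge β b γ c → r ≤ a → r ≤ b → RelClose P C (α a) (β b) →
      Tracks P C r β b γ c → FellowTravel P C' (r - C') α a γ c := by
  obtain ⟨C', hCC', hne⟩ := hY.exists_fellowTravel_of_ne hC
  refine ⟨2 * C + C', by linarith, fun α a β b γ c r hαβ hβγ hra hrb hrel htracks => ?_⟩
  have ha : a ∈ Icc 0 a := ⟨hαβ.left_nonneg, le_rfl⟩
  rcases htracks with ⟨t, ht, hbt⟩ | ⟨i, hβi, hmeet, t, ht, hrt, hti⟩
  · refine ⟨a, ha, t, ht, by linarith, ?_, hrel.trans_dist_le hC hbt (by linarith)⟩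
    linarith [hβγ.le_add_dist ⟨hβγ.left_nonneg, le_rfl⟩ ht]
  · have of_mem : α a ∈ cthickening (C + C) (P i) → FellowTravel P (2 * C + C') (r - (2 * C + C'))
        α a γ c := fun hαi => ⟨a, ha, t, ht, by linarith, by linarith,
      .inr ⟨i, cthickening_mono (by linarith) _ hαi, cthickening_mono (by linarith) _ hti⟩⟩
    rcases hrel with hab | ⟨k, hαk, hβk⟩
    · exact of_mem (mem_cthickening_of_mem_of_dist_le hβi hC (dist_comm (α a) _ ▸ hab) le_rfl)
    · by_cases hik : P i = P k
      · exact of_mem (cthickening_mono (by linarith) _ (hik ▸ hαk))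
      · exact (hne i k α a β b γ c t r hik hαβ hβγ hra hrb hαk hβk hβi hmeet ht hrt hti).mono
          (by linarith) (by linarith)

lemma exists_tracks_of_dist_le (hY : DrutuRelHyp Y P) {F : ℝ} (hF : 0 ≤ F) : ∃ C ≥ 0,
    ∀ γ l η m s s' t, Hinge γ l η m → s ∈ Icc 0 l → s' ∈ Icc s l → t ∈ Icc 0 m →
      dist (γ s') (η t) ≤ F → Tracks P C s γ s η m := by
  obtain ⟨C, hC, htracks⟩ := hY.exists_tracks_of_gromovProd_le hF
  refine ⟨C, hC, fun γ l η m s s' t h hs hs' ht hclose => ?_⟩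
  have hs₀ : s' ∈ Icc 0 l := ⟨hs.1.trans hs'.1, hs'.2⟩
  refine (htracks γ s η t (h.restrict hs ht) ?_).mono le_rfl le_rfl ht.2
  rw [gromovProd, dist_comm (γ s) (γ 0), h.dist_left hs, h.dist_right ht]
  linarith [dist_triangle (γ s) (γ s') (η t), h.left.dist_eq hs.1 hs'.1 hs'.2,
    h.le_add_dist hs₀ ht]

lemma exists_tracks_of_relClose (hY : DrutuRelHyp Y P) {D : ℝ} (hD : 0 ≤ D) : ∃ C ≥ 0,
    ∀ γ l η m s t r, Hinge γ l η m → s ∈ Icc 0 l → t ∈ Icc 0 m → RelClose P D (γ l) (η t) →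
      r ≤ s → r ≤ t → Tracks P C r γ s η m := by
  obtain ⟨F, hDF, hmeet⟩ := hY.exists_meetNear hD
  obtain ⟨H, hFH, hconv⟩ := hY.exists_quasiconvex (hD.trans hDF)
  obtain ⟨C, hC, htracks⟩ := hY.exists_tracks_of_dist_le (hD.trans hDF)
  refine ⟨C + H, by linarith, fun γ l η m s t r h hs ht hrel hrs hrt => ?_⟩
  rcases hrel with hlt | ⟨j, hlj, htj⟩
  · exact (htracks γ l η m s l t h hs ⟨hs.2, le_rfl⟩ ht (hlt.trans hDF)).mono (by linarith) hrs
      le_rfl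
  · obtain ⟨s', hs', t', ht', hsj, htj', hst⟩ := hmeet j γ l η t
      (h.restrict ⟨h.left_nonneg, le_rfl⟩ ht) hlj htj
    have ht'm : t' ∈ Icc 0 m := ⟨ht'.1, ht'.2.trans ht.2⟩
    rcases le_total s s' with hss | hss
    · exact (htracks γ l η m s s' t' h hs ⟨hss, hs'.2⟩ ht'm hst).mono (by linarith) hrs le_rfl
    · refine .inr ⟨j, ?_, .mono ⟨s', ⟨hs'.1, hss⟩, t', ht'm, hsj, htj', hst⟩ (by linarith),
        t, ht, by linarith, cthickening_mono (by linarith) _ htj⟩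
      exact cthickening_mono (by linarith) _ (hconv j γ s' l (h.left.mono hs'.1 le_rfl) hsj
        (cthickening_mono hDF _ hlj) s ⟨hss, hs.2⟩)

lemma exists_fellowTravel_trans (hY : DrutuRelHyp Y P) {D : ℝ} (hD : 0 ≤ D)
    (hDP : Absorbing P D) : ∃ C ≥ 0, ∀ γ l η m ζ n r, Hinge γ l η m → Hinge η m ζ n →
      FellowTravel P D r γ l η m → FellowTravel P D r η m ζ n →
      FellowTravel P D (r - C) γ l ζ n := by
  obtain ⟨C₁, hC₁, htracks⟩ := hY.exists_tracks_of_relClose hD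
  obtain ⟨C₂, hC₂, hfellow⟩ := hY.exists_fellowTravel_of_tracks (C := C₁ + D) (by linarith)
  obtain ⟨C₃, hC₃, habsorb⟩ := hDP C₂
  have key : ∀ γ l η m ζ n r s t t' u, Hinge γ l η m → Hinge η m ζ n → s ∈ Icc 0 l →
      t ∈ Icc 0 t' → t' ∈ Icc 0 m → u ∈ Icc 0 n → r ≤ s → r ≤ t → r ≤ u →
      RelClose P D (γ s) (η t) → RelClose P D (η t') (ζ u) →
      FellowTravel P D (r - (C₂ + C₃)) γ l ζ n := by
    intro γ l η m ζ n r s t t' u hγη hηζ hs ht ht' hu hrs hrt hru hst htu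
    have hn : n ∈ Icc 0 n := ⟨hηζ.right_nonneg, le_rfl⟩
    have htm : t ∈ Icc 0 m := ⟨ht.1, ht.2.trans ht'.2⟩
    have htr := (htracks η t' ζ n t u r (hηζ.restrict ht' hn) ht hu htu hrt hru).mono
      (le_add_of_nonneg_right hD) le_rfl le_rfl
    have hγζ := hfellow γ s η t ζ n r (hγη.restrict hs htm) (hηζ.restrict htm hn) hrs hrt
      (hst.mono (le_add_of_nonneg_left hC₁)) htr
    exact (habsorb γ l ζ n _ (hγη.trans hηζ) (hγζ.extend hs.2 le_rfl)).mono le_rfl (by linarith)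
  refine ⟨C₂ + C₃, by positivity, ?_⟩
  rintro γ l η m ζ n r hγη hηζ ⟨s, hs, t, ht, hrs, hrt, hst⟩ ⟨t', ht', u, hu, hrt', hru, htu⟩
  rcases le_total t t' with htt | htt
  · exact key γ l η m ζ n r s t t' u hγη hηζ hs ⟨ht.1, htt⟩ ht' hu hrs hrt hru hst htu
  · exact (key ζ n η m γ l r u t' t s hηζ.symm hγη.symm hu ⟨ht'.1, htt⟩ ht hs hru hrt' hrs
      htu.symm hst.symm).symm

end DrutuRelHyp

section Shadows

variable {Y : Type*} [MetricSpace Y] {ι : Type*} {P : ι → Set Y}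

/-- Geodesics from `p` to `x` and from `p` to `y` travel together, relatively to the peripheral
sets, up to distance `r` from `p`. -/
def SameShadow (P : ι → Set Y) (D : ℝ) (p : Y) (r : ℝ) (x y : Y) : Prop :=
  ∀ γ η, IsGeodesicFrom γ p x → IsGeodesicFrom η p y →
    FellowTravel P D r γ (dist p x) η (dist p y)

lemma SameShadow.symm {D r : ℝ} {p x y : Y} (h : SameShadow P D p r x y) :
    SameShadow P D p r y x :=
  fun γ η hγ hη => (h η γ hη hγ).symm

/-- The properties of the relations `r ≤ (x | y)_p` that enter the proof of the Morse lemma. -/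
structure IsShadowRel (G : Y → ℝ → Y → Y → Prop) : Prop where
  anti : ∀ ⦃p r r' x y⦄, r' ≤ r → G p r x y → G p r' x y
  trans : ∃ C ≥ 0, ∀ p r x y z, G p r x y → G p r y z → G p (r - C) x z
  of_dist_le : ∀ E, ∃ C ≥ 0, ∀ p r x y, dist x y ≤ E → r ≤ dist p x → r ≤ dist p y →
    G p (r - C) x y

lemma DrutuRelHyp.exists_isShadowRel [GeodesicSpace Y] (hY : DrutuRelHyp Y P) :
    ∃ D ≥ 0, IsShadowRel (SameShadow P D) := by
  obtain ⟨D, hD, hDP⟩ := hY.exists_absorbing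
  obtain ⟨C, hC, htrans⟩ := hY.exists_fellowTravel_trans hD hDP
  refine ⟨D, hD, fun p r r' x y hr h γ η hγ hη => (h γ η hγ hη).mono le_rfl hr, ?_, fun E => ?_⟩
  · refine ⟨C, hC, fun p r x y z hxy hyz γ ζ hγ hζ => ?_⟩
    obtain ⟨η, hη⟩ := GeodesicSpace.exists_geod p y
    exact htrans γ _ η _ ζ _ r (hγ.hinge hη) (hη.hinge hζ) (hxy γ η hγ hη) (hyz η ζ hη hζ)
  · obtain ⟨C', hC', habsorb⟩ := hDP E
    refine ⟨C', hC', fun p r x y hxy hrx hry γ η hγ hη => habsorb γ _ η _ r (hγ.hinge hη) ?_⟩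
    exact ⟨dist p x, ⟨dist_nonneg, le_rfl⟩, dist p y, ⟨dist_nonneg, le_rfl⟩, hrx, hry,
      .inl (by rwa [hγ.2.1, hη.2.1])⟩

end Shadows

lemma IsCoarseProj.of_geodesicOn {Y : Type*} [MetricSpace Y] {A : Set Y} {γ : ℝ → Y} {p : Y}
    {E F a b s t : ℝ} (h : IsCoarseProj A E (γ b) p) (hγ : GeodesicOn γ a b) (hs : a ≤ s)
    (hst : s ≤ t) (ht : t ≤ b) (hp : dist (γ s) p ≤ F) : IsCoarseProj A (E + 2 * F) (γ t) p := by
  refine h.of_gromovProd_le ?_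
  rw [gromovProd, hγ.dist_eq (hs.trans hst) ht le_rfl]
  linarith [dist_triangle_left (γ t) p (γ s), dist_triangle_right (γ s) (γ b) p,
    hγ.dist_eq hs hst ht, hγ.dist_eq hs (hst.trans ht) le_rfl]

namespace DrutuRelHyp

variable {Y : Type*} [MetricSpace Y] {ι : Type*} {P : ι → Set Y} [GeodesicSpace Y]

lemma exists_dist_proj_le_of_mem_cthickening (hY : DrutuRelHyp Y P) {E H : ℝ} (hE : 0 ≤ E)
    (hH : 0 ≤ H) : ∃ C ≥ 0, ∀ i k x y p q, P i ≠ P k → IsCoarseProj (P k) E x p →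
      IsCoarseProj (P k) E y q → x ∈ cthickening H (P i) → y ∈ cthickening H (P i) →
      dist p q ≤ C := by
  obtain ⟨C₁, hC₁, hend⟩ := hY.exists_dist_proj_end_le le_rfl hE
  obtain ⟨F, hHF, hmeet⟩ := hY.exists_meetNear hH
  obtain ⟨L, hL, hconv⟩ := hY.exists_quasiconvex (H := C₁ + F) (by linarith)
  obtain ⟨B, hB, hinter⟩ := hY.exists_dist_le_of_mem_inter L
  obtain ⟨C₂, hC₂, hclose⟩ := hY.exists_dist_proj_le_of_dist_le (E := E + 2 * C₁) (F := F)
    (by positivity) (hH.trans hHF)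
  refine ⟨C₂ + 2 * (F + B + C₁) + E, by linarith, fun i k x y p q hik hp hq hx hy => ?_⟩
  obtain ⟨ζ, hζ⟩ := GeodesicSpace.exists_geod q x
  obtain ⟨ξ, hξ⟩ := GeodesicSpace.exists_geod q y
  have hζk (δ : ℝ) : ζ 0 ∈ cthickening δ (P k) := hζ.1 ▸ self_subset_cthickening _ hq.1
  rw [← hζ.2.1] at hp hx
  rw [← hξ.2.1] at hq hy
  obtain ⟨s, hs, t, ht, hsi, -, hst⟩ := hmeet i _ _ _ _ (hζ.hinge hξ) hx hy
  obtain ⟨v, hv, hvp⟩ := hend k ζ _ p dist_nonneg hζ.geodesicOn (hζk 0) hp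
  have hqt : IsCoarseProj (P k) E (ξ t) q := by
    simpa using hq.of_geodesicOn (F := 0) hξ.geodesicOn le_rfl ht.1 ht.2 (by simp [hξ.1])
  have hvk : ζ v ∈ cthickening (C₁ + F) (P k) := mem_cthickening_of_mem_of_dist_le
    (self_subset_cthickening _ hp.1) le_rfl (dist_comm p _ ▸ hvp) (by linarith)
  rcases le_total s v with hsv | hvs
  · have hsk : ζ s ∈ cthickening L (P k) := hconv k ζ 0 v (hζ.geodesicOn.mono le_rfl hv.2)
      (hζk _) hvk s ⟨hs.1, hsv⟩
    have hvi : ζ v ∈ cthickening L (P i) := hconv i ζ s _ (hζ.geodesicOn.mono hs.1 le_rfl)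
      (cthickening_mono (by linarith) _ hsi) (cthickening_mono (by linarith) _ hx) v ⟨hsv, hv.2⟩
    have hsv' := hinter i k hik _ ⟨cthickening_mono (by linarith) _ hsi, hsk⟩ _
      ⟨hvi, cthickening_mono hL _ hvk⟩
    have htp : dist (ξ t) p ≤ F + B + C₁ := by
      linarith [dist_triangle4 (ξ t) (ζ s) (ζ v) p, dist_comm (ξ t) (ζ s)]
    linarith [dist_triangle_left p q (ξ t), hqt.dist_le_dist_add hp.1]
  · have hps := hp.of_geodesicOn hζ.geodesicOn hv.1 hvs hs.2 hvp
    linarith [hclose k _ _ p q hps (hqt.mono (by linarith)) hst]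

lemma exists_dist_proj_le_of_relClose (hY : DrutuRelHyp Y P) {E D : ℝ} (hE : 0 ≤ E)
    (hD : 0 ≤ D) : ∃ C ≥ 0, ∀ k x y p q, IsCoarseProj (P k) E x p → IsCoarseProj (P k) E y q →
      RelClose P D x y → x ∉ cthickening D (P k) → dist p q ≤ C := by
  obtain ⟨C₁, hC₁, hclose⟩ := hY.exists_dist_proj_le_of_dist_le hE hD
  obtain ⟨C₂, -, hperipheral⟩ := hY.exists_dist_proj_le_of_mem_cthickening hE hD
  refine ⟨max C₁ C₂, le_max_of_le_left hC₁, fun k x y p q hp hq hxy hxk => ?_⟩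
  rcases hxy with hxy | ⟨i, hxi, hyi⟩
  · exact (hclose k x y p q hp hq hxy).trans (le_max_left _ _)
  · have hik : P i ≠ P k := fun h => hxk (h ▸ hxi)
    exact (hperipheral i k x y p q hik hp hq hxi hyi).trans (le_max_right _ _)

lemma exists_not_sameShadow (hY : DrutuRelHyp Y P) {D : ℝ} (hD : 0 ≤ D) :
    ∃ C ≥ 0, ∃ r ≥ 0, ∀ k x y p q, IsCoarseProj (P k) 1 x p → IsCoarseProj (P k) 1 y q →
      C ≤ dist p q → ¬ SameShadow P D p r x y := by
  obtain ⟨C₁, hC₁, hend⟩ := hY.exists_dist_proj_end_le le_rfl zero_le_one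
  obtain ⟨H, hH, hconv⟩ := hY.exists_quasiconvex hC₁
  obtain ⟨C₂, hC₂, hclose⟩ := hY.exists_dist_proj_le_of_relClose (E := 1 + 2 * C₁)
    (by positivity) hD
  refine ⟨C₂ + 1, by positivity, C₂ + H + D + 2, by linarith, ?_⟩
  intro k x y p q hp hq hpq hshadow
  obtain ⟨γ, hγ⟩ := GeodesicSpace.exists_geod p x
  obtain ⟨η, hη⟩ := GeodesicSpace.exists_geod p y
  have hpk (δ : ℝ) : p ∈ cthickening δ (P k) := self_subset_cthickening _ hp.1
  rw [← hγ.2.1] at hp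
  rw [← hη.2.1] at hq
  obtain ⟨s, hs, t, ht, hrs, hrt, hst⟩ := hshadow γ η hγ hη
  obtain ⟨m, hm, hmq⟩ := hend k η _ q dist_nonneg hη.geodesicOn (by rw [hη.1]; exact hpk 0) hq
  have hps : IsCoarseProj (P k) 1 (γ s) p := by
    simpa using hp.of_geodesicOn (F := 0) hγ.geodesicOn le_rfl hs.1 hs.2 (by simp [hγ.1])
  have hsk : γ s ∉ cthickening D (P k) := fun hsk => by
    linarith [hps.dist_le hD hsk, dist_comm p (γ s), hγ.dist_left hs]
  rcases le_total t m with htm | hmt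
  · have hmk : η m ∈ cthickening C₁ (P k) := mem_cthickening_of_mem_of_dist_le
      (self_subset_cthickening _ hq.1) le_rfl (dist_comm q _ ▸ hmq) (by linarith)
    have htk : η t ∈ cthickening H (P k) := hconv k η 0 m (hη.geodesicOn.mono le_rfl hm.2)
      (by rw [hη.1]; exact hpk C₁) hmk t ⟨ht.1, htm⟩
    obtain ⟨q', hq'⟩ := exists_isCoarseProj ⟨p, hp.1⟩ (η t)
    have hpq' := hclose k _ _ p q' (hps.mono (by linarith)) (hq'.mono (by linarith)) hst hsk
    linarith [hη.dist_left ht, dist_triangle_right p (η t) q', hq'.dist_le (by linarith) htk]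
  · have hqt := hq.of_geodesicOn hη.geodesicOn hm.1 hmt ht.2 hmq
    linarith [hclose k _ _ p q (hps.mono (by linarith)) hqt hst hsk]

end DrutuRelHyp

lemma exists_first_last {Q : ℕ → Prop} {i j k : ℕ} (hk : k ∈ Icc i j) (hQ : Q k) :
    ∃ l ∈ Icc i j, ∃ m ∈ Icc l j, Q l ∧ Q m ∧
      (∀ n, i ≤ n → n < l → ¬ Q n) ∧ ∀ n, m < n → n ≤ j → ¬ Q n := by
  classical
  set S := (Finset.Icc i j).filter Q with hS
  have mem_S : ∀ n, n ∈ S ↔ (i ≤ n ∧ n ≤ j) ∧ Q n := fun n => by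
    rw [hS, Finset.mem_filter, Finset.mem_Icc]
  have hne : S.Nonempty := ⟨k, (mem_S k).2 ⟨hk, hQ⟩⟩
  obtain ⟨hl, hQl⟩ := (mem_S _).1 (S.min'_mem hne)
  obtain ⟨hm, hQm⟩ := (mem_S _).1 (S.max'_mem hne)
  refine ⟨S.min' hne, hl, S.max' hne, ⟨S.min'_le_max' hne, hm.2⟩, hQl, hQm,
    fun n hin hn hQn => ?_, fun n hn hnj hQn => ?_⟩
  · exact hn.not_ge (S.min'_le n ((mem_S n).2 ⟨⟨hin, hn.le.trans hl.2⟩, hQn⟩))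
  · exact hn.not_ge (S.le_max' n ((mem_S n).2 ⟨⟨hm.1.trans hn.le, hnj⟩, hQn⟩))

section Chains

variable {Y : Type*} [MetricSpace Y] {G : Y → ℝ → Y → Y → Prop} {E : ℝ}

/-- The points `y 0, …, y N` form a chain with jumps at most `E` which is subexponentially
distorted with exponent `κ` at scales larger than `T`. -/
structure IsSubexpChain (E κ T : ℝ) (y : ℕ → Y) (N : ℕ) : Prop where
  dist_succ_le : ∀ l < N, dist (y l) (y (l + 1)) ≤ E
  sub_le_exp : ∀ i j : ℕ, i ≤ j → j ≤ N → (j - i : ℝ) ≤ Real.exp (κ * max T (dist (y i) (y j)))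

namespace IsShadowRel

lemma exists_of_chain_length_le (hG : IsShadowRel G) (hE : 0 ≤ E) : ∃ C ≥ 0, ∀ (y : ℕ → Y) (N : ℕ),
    (∀ l < N, dist (y l) (y (l + 1)) ≤ E) → ∀ p r, ∀ m i j : ℕ, i ≤ j → j ≤ N → j - i ≤ 2 ^ m →
      (∀ l ∈ Icc i j, r ≤ dist p (y l)) → G p (r - C - m * C) (y i) (y j) := by
  obtain ⟨C₁, hC₁, htrans⟩ := hG.trans
  obtain ⟨C₂, hC₂, hclose⟩ := hG.of_dist_le E
  refine ⟨C₁ + C₂, by positivity, fun y N hstep p r m => ?_⟩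
  induction m with
  | zero =>
    intro i j hij hj hlen hr
    have hdist : dist (y i) (y j) ≤ E := by
      rcases (show j = i ∨ j = i + 1 by omega) with rfl | rfl
      · rwa [dist_self]
      · exact hstep i (by omega)
    exact hG.anti (by simp [hC₁]) (hclose p r _ _ hdist (hr i ⟨le_rfl, hij⟩) (hr j ⟨hij, le_rfl⟩))
  | succ m ih =>
    intro i j hij hj hlen hr
    rw [pow_succ] at hlen
    have hfst := ih i ((i + j) / 2) (by omega) (by omega) (by omega)
      fun l hl => hr l ⟨hl.1, by have := hl.2; omega⟩
    have hsnd := ih ((i + j) / 2) j (by omega) hj (by omega)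
      fun l hl => hr l ⟨by have := hl.1; omega, hl.2⟩
    exact hG.anti (by push_cast; linarith) (htrans p _ _ _ _ hfst hsnd)

lemma exists_of_subexpChain_in_annulus (hG : IsShadowRel G) (hE : 0 ≤ E) : ∃ κ > 0, ∀ T, ∃ K ≥ 0,
    ∀ y N, IsSubexpChain E κ T y N → ∀ p R, ∀ i j : ℕ, i ≤ j → j ≤ N → K ≤ R →
      (∀ l ∈ Icc i j, R ≤ dist p (y l)) → dist p (y i) ≤ 10 * R → dist p (y j) ≤ 10 * R →
      G p (R / 2) (y i) (y j) := by
  obtain ⟨C, hC, hchain⟩ := hG.exists_of_chain_length_le hE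
  refine ⟨Real.log 2 / (80 * (C + 1)), by positivity, fun T => ?_⟩
  refine ⟨|T| + 8 * C, by positivity, fun y N hy p R i j hij hj hK hR hi hj' => ?_⟩
  set κ := Real.log 2 / (80 * (C + 1)) with hκ
  have hT : T ≤ 20 * R := by linarith [le_abs_self T, abs_nonneg T]
  have hR₀ : 0 ≤ R := by linarith [abs_nonneg T]
  have hdist : dist (y i) (y j) ≤ 20 * R := by linarith [dist_triangle_left (y i) (y j) p]
  set m := ⌈R / (4 * (C + 1))⌉₊
  have hlen : (j - i : ℝ) ≤ 2 ^ m := by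
    have hexponent : κ * max T (dist (y i) (y j)) ≤ m * Real.log 2 := calc
      κ * max T (dist (y i) (y j)) ≤ κ * (20 * R) := by
        gcongr
        exact max_le hT hdist
      _ = R / (4 * (C + 1)) * Real.log 2 := by rw [hκ]; field_simp; ring
      _ ≤ m * Real.log 2 := by gcongr; exact Nat.le_ceil _
    rw [← Real.exp_log (show (0 : ℝ) < 2 ^ m by positivity), Real.log_pow]
    exact (hy.sub_le_exp i j hij hj).trans (Real.exp_le_exp.2 hexponent)
  have hloss : m * C ≤ R / 4 + C := calc
    m * C ≤ (R / (4 * (C + 1)) + 1) * C := by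
      gcongr
      exact (Nat.ceil_lt_add_one (by positivity)).le
    _ = R / 4 * (C / (C + 1)) + C := by field_simp
    _ ≤ R / 4 + C := by
      gcongr
      exact mul_le_of_le_one_right (by positivity) ((div_le_one (by positivity)).2 (by linarith))
  refine hG.anti (by linarith [abs_nonneg T])
    (hchain y N hy.dist_succ_le p R m i j hij hj ?_ hR)
  rw [← Nat.cast_sub hij] at hlen
  exact_mod_cast hlen

lemma of_outside_first_last (hG : IsShadowRel G) {C r : ℝ} {p : Y} {y : ℕ → Y} {Q : ℕ → Prop}
    {i j l m : ℕ} (hC : 0 ≤ C)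
    (htrans : ∀ p r x y z, G p r x y → G p r y z → G p (r - C) x z)
    (hl : l ∈ Icc i j) (hm : m ∈ Icc l j)
    (hfirst : ∀ n, i ≤ n → n < l → ¬ Q n) (hlast : ∀ n, m < n → n ≤ j → ¬ Q n)
    (hclose : ∀ a ∈ Icc i j, ∀ b ∈ Icc a (a + 1), b ≤ j → G p (r + 3 * C) (y a) (y b))
    (hout : ∀ a b, a ≤ b → b ≤ j → b - a < j - i → (∀ u ∈ Icc a b, ¬ Q u) →
      G p (r + 3 * C) (y a) (y b))
    (hmid : G p (r + 2 * C) (y l) (y m)) : G p r (y i) (y j) := by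
  obtain ⟨hil, hlj⟩ := hl
  obtain ⟨hlm, hmj⟩ := hm
  have hleft : G p (r + 2 * C) (y i) (y l) := by
    rcases hil.eq_or_lt with rfl | hil
    · exact hG.anti (by linarith) (hclose i ⟨le_rfl, hlj⟩ i ⟨le_rfl, i.le_succ⟩ hlj)
    · obtain ⟨k, rfl⟩ := Nat.exists_eq_succ_of_ne_zero (Nat.ne_zero_of_lt hil)
      have hik := hout i k (by omega) (by omega) (by omega)
        fun u hu => hfirst u hu.1 (Nat.lt_succ_of_le hu.2)
      have hkl := hclose k ⟨by omega, by omega⟩ (k + 1) ⟨k.le_succ, le_rfl⟩ hlj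
      exact hG.anti (by linarith) (htrans p _ _ _ _ hik hkl)
  have hright : G p (r + 2 * C) (y m) (y j) := by
    rcases hmj.eq_or_lt with rfl | hmj
    · exact hG.anti (by linarith) (hclose m ⟨hil.trans hlm, le_rfl⟩ m ⟨le_rfl, m.le_succ⟩ le_rfl)
    · have hmk := hclose m ⟨hil.trans hlm, hmj.le⟩ (m + 1) ⟨m.le_succ, le_rfl⟩ hmj
      have hkj := hout (m + 1) j hmj le_rfl (by omega) fun u hu => hlast u hu.1 hu.2
      exact hG.anti (by linarith) (htrans p _ _ _ _ hmk hkj)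
  have hlj := htrans p _ _ _ _ hmid hright
  exact hG.anti (by linarith) (htrans p (r + C) _ _ _ (hG.anti (by linarith) hleft)
    (hG.anti (by linarith) hlj))

/-- Induction on the length of the chain: if `R` is its distance to `p`, then the part between the
first and last visits to the ball of radius `10 R` is short enough for dyadic subdivision, and the
induction hypothesis applies to the two remaining parts. -/
lemma exists_dist_le_of_subexpChain (hG : IsShadowRel G) (hE : 0 ≤ E) : ∃ κ > 0, ∀ T, ∃ K ≥ 0,
    ∀ y N, IsSubexpChain E κ T y N → ∀ p, ∀ i j : ℕ, i ≤ j → j ≤ N → ∀ r ≥ 0,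
      ¬ G p r (y i) (y j) → ∃ l ∈ Icc i j, dist p (y l) ≤ 2 * r + K := by
  obtain ⟨C, hC, htrans⟩ := hG.trans
  obtain ⟨C₁, hC₁, hclose⟩ := hG.of_dist_le E
  obtain ⟨κ, hκ, hannulus⟩ := hG.exists_of_subexpChain_in_annulus hE
  refine ⟨κ, hκ, fun T => ?_⟩
  obtain ⟨K, hK, hannulus⟩ := hannulus T
  refine ⟨K + C₁ + 4 * C, by positivity, fun y N hy p i j => ?_⟩
  induction hn : j - i using Nat.strong_induction_on generalizing i j with
  | _ n ih =>
  intro hij hj r hr hnot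
  by_contra! hfar
  obtain ⟨k, hk, hmin⟩ := Finset.exists_min_image (Finset.Icc i j) (fun l => dist p (y l))
    ⟨i, Finset.left_mem_Icc.2 hij⟩
  simp only [Finset.mem_Icc] at hk hmin
  set R := dist p (y k)
  have hrR := hfar k hk
  obtain ⟨l, hl, m, hm, hl10, hm10, hfirst, hlast⟩ :=
    exists_first_last (Q := fun l => dist p (y l) ≤ 10 * R) hk (by linarith)
  refine hnot (hG.of_outside_first_last hC htrans hl hm hfirst hlast ?_ ?_ ?_)
  · intro a ha b hb hbj
    have hab : dist (y a) (y b) ≤ E := by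
      rcases (show b = a ∨ b = a + 1 by have := hb.1; have := hb.2; omega) with rfl | rfl
      · rwa [dist_self]
      · exact hy.dist_succ_le a (by omega)
    exact hG.anti (by linarith) (hclose p (r + C₁ + 3 * C) _ _ hab (by linarith [hfar a ha])
      (by linarith [hfar b ⟨ha.1.trans hb.1, hbj⟩]))
  · intro a b hab hb hlen hout
    by_contra hnot'
    obtain ⟨u, hu, hdist⟩ := ih (b - a) (hn ▸ hlen) a b rfl hab (hb.trans hj) (r + 3 * C)
      (by linarith) hnot'
    exact hout u hu (by linarith)
  · exact hG.anti (by linarith) (hannulus y N hy p R l m hm.1 (hm.2.trans hj) (by linarith)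
      (fun u hu => hmin u ⟨hl.1.trans hu.1, hu.2.trans hm.2⟩) hl10 hm10)

end IsShadowRel

end Chains

section Morse

variable {X Y : Type*} [MetricSpace X] [MetricSpace Y] {f : X → Y}

namespace SubexponentiallyDistorted

lemma exists_dist_le_add_exp (hf : SubexponentiallyDistorted f) {κ : ℝ} (hκ : 0 < κ) :
    ∃ A ≥ 0, ∀ x y, dist x y ≤ A + Real.exp (κ * dist (f x) (f y)) := by
  obtain ⟨-, τ, hτ, hle⟩ := hf
  obtain ⟨R, hR⟩ := (hτ.eventually_ge_atTop (1 / κ)).exists_forall_of_atTop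
  refine ⟨max R 2, by positivity, fun x y => ?_⟩
  rcases le_total (dist x y) (max R 2) with hshort | hlong
  · linarith [Real.exp_pos (κ * dist (f x) (f y))]
  · have htwo : 2 ≤ dist x y := (le_max_right _ _).trans hlong
    have hτlog := hR _ ((le_max_left _ _).trans hlong)
    rw [div_le_div_iff₀ hκ (Real.log_pos (by linarith))] at hτlog
    have hlog : Real.log (dist x y) ≤ κ * dist (f x) (f y) := by
      linarith [mul_le_mul_of_nonneg_right (hle x y) hκ.le]
    linarith [(Real.log_le_iff_le_exp (by linarith)).1 hlog, le_max_right R 2]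

lemma exists_dist_le (hf : SubexponentiallyDistorted f) (A : ℝ) :
    ∃ R ≥ 0, ∀ x y, dist (f x) (f y) ≤ A → dist x y ≤ R := by
  obtain ⟨B, hB, h⟩ := hf.exists_dist_le_add_exp one_pos
  exact ⟨B + Real.exp (1 * A), by positivity, fun x y hxy => (h x y).trans (by gcongr)⟩

lemma exists_isSubexpChain (hf : SubexponentiallyDistorted f) {c : ℝ} (hc : 0 ≤ c) :
    ∃ E ≥ 0, ∀ κ > 0, ∃ T, ∀ a b γ, a ≤ b → QGeodPath c a b γ →
      IsSubexpChain E κ T (fun l : ℕ => f (γ (min (a + l) b))) ⌈b - a⌉₊ := by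
  obtain ⟨L, hL, hlip⟩ := hf.1
  refine ⟨L * (1 + c) + L, by positivity, fun κ hκ => ?_⟩
  obtain ⟨A, -, hexp⟩ := hf.exists_dist_le_add_exp (half_pos hκ)
  refine ⟨2 * (A + 1 + c) / κ, fun a b γ hab hγ => ?_⟩
  have hmem (l : ℕ) : min (a + l) b ∈ Icc a b :=
    ⟨le_min (by linarith [l.cast_nonneg (α := ℝ)]) hab, min_le_right _ _⟩
  refine ⟨fun l _ => ?_, fun i j _ hj => ?_⟩
  · have hstep : |min (a + l) b - min (a + (l + 1 : ℕ)) b| ≤ 1 :=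
      (abs_min_sub_min_le_max _ _ _ _).trans (by simp)
    refine (hlip _ _).trans ?_
    gcongr
    exact (hγ.2 _ (hmem l) _ (hmem (l + 1))).2.trans (by gcongr)
  · set M := max (2 * (A + 1 + c) / κ) (dist (f (γ (min (a + i) b))) (f (γ (min (a + j) b))))
    have hceil : (j : ℝ) < b - a + 1 :=
      (Nat.cast_le.2 hj).trans_lt (Nat.ceil_lt_add_one (sub_nonneg.2 hab))
    have htime : (j - i : ℝ) - 1 ≤ |min (a + i) b - min (a + j) b| := by
      have hj' : a + j - 1 ≤ min (a + j) b := le_min (by linarith) (by linarith)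
      linarith [neg_le_abs (min (a + i) b - min (a + j) b), min_le_left (a + (i : ℝ)) b]
    have hdist : dist (γ (min (a + i) b)) (γ (min (a + j) b)) ≤ A + Real.exp (κ / 2 * M) :=
      (hexp _ _).trans (by gcongr; exact le_max_right _ _)
    have hM : A + 1 + c + 1 ≤ Real.exp (κ / 2 * M) := by
      have hTM : 2 * (A + 1 + c) / κ ≤ M := le_max_left _ _
      rw [div_le_iff₀ hκ] at hTM
      linarith [Real.add_one_le_exp (κ / 2 * M)]
    have hsq : Real.exp (κ * M) = Real.exp (κ / 2 * M) ^ 2 := by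
      rw [← Real.exp_nat_mul]
      congr 1
      push_cast
      ring
    rw [hsq]
    nlinarith [(hγ.2 _ (hmem i) _ (hmem j)).1, sq_nonneg (Real.exp (κ / 2 * M) - 1)]

end SubexponentiallyDistorted

lemma IsShadowRel.exists_dist_le_of_qGeodPath {G : Y → ℝ → Y → Y → Prop} (hG : IsShadowRel G)
    (hf : SubexponentiallyDistorted f) {c : ℝ} (hc : 0 ≤ c) : ∃ K ≥ 0, ∀ a b γ, a ≤ b →
      QGeodPath c a b γ → ∀ p, ∀ r ≥ 0, ¬ G p r (f (γ a)) (f (γ b)) →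
        ∃ u ∈ Icc a b, dist p (f (γ u)) ≤ 2 * r + K := by
  obtain ⟨E, hE, hchain⟩ := hf.exists_isSubexpChain hc
  obtain ⟨κ, hκ, hmorse⟩ := hG.exists_dist_le_of_subexpChain hE
  obtain ⟨T, hchain⟩ := hchain κ hκ
  obtain ⟨K, hK, hmorse⟩ := hmorse T
  refine ⟨K, hK, fun a b γ hab hγ p r hr hnot => ?_⟩
  have hstart : min (a + ((0 : ℕ) : ℝ)) b = a := by simp [hab]
  have hend : min (a + (⌈b - a⌉₊ : ℝ)) b = b := min_eq_right (by linarith [Nat.le_ceil (b - a)])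
  obtain ⟨l, -, hl⟩ := hmorse _ _ (hchain a b γ hab hγ) p 0 _ (Nat.zero_le _) le_rfl r hr
    (by rwa [hstart, hend])
  exact ⟨_, ⟨le_min (by linarith [l.cast_nonneg (α := ℝ)]) hab, min_le_right _ _⟩, hl⟩

end Morse

section Contraction

variable {X Y : Type*} [MetricSpace X] [MetricSpace Y] {f : X → Y} {ι : Type*} {P : ι → Set Y}
  {C c K ρ : ℝ}

/-- The images under `f` of `(1, c)`-quasi-geodesics contract towards the sets `P k`: if the
projections of the endpoints to `P k` are at distance at least `C`, then the image path passes
`K`-close to both of them. -/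
def Contracting (f : X → Y) (P : ι → Set Y) (C c K : ℝ) : Prop :=
  ∀ k a b γ p q, a ≤ b → QGeodPath c a b γ → IsCoarseProj (P k) 1 (f (γ a)) p →
    IsCoarseProj (P k) 1 (f (γ b)) q → C ≤ dist p q →
      (∃ u ∈ Icc a b, dist p (f (γ u)) ≤ K) ∧ ∃ u ∈ Icc a b, dist q (f (γ u)) ≤ K

/-- Up to bounded error, the coarse preimages of the sets `P k` do not grow beyond the preimages of
the `ρ`-neighbourhoods: points of the preimage of an `H`-neighbourhood which are far apart are at
bounded distance from the preimage of the `ρ`-neighbourhood. -/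
def PreimagesStabilize (f : X → Y) (P : ι → Set Y) (ρ : ℝ) : Prop :=
  ∀ H ≥ 0, ∃ R ≥ 0, ∀ k a a', f a ∈ cthickening H (P k) → f a' ∈ cthickening H (P k) →
    2 * R ≤ dist a a' → a ∈ cthickening R (f ⁻¹' cthickening ρ (P k))

lemma PreimagesStabilize.mono (h : PreimagesStabilize f P ρ) {ρ' : ℝ} (hρ : ρ ≤ ρ') :
    PreimagesStabilize f P ρ' := by
  intro H hH
  obtain ⟨R, hR, h⟩ := h H hH
  exact ⟨R, hR, fun k a a' ha ha' hd => cthickening_subset_of_subset R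
    (preimage_mono (cthickening_mono hρ _)) (h k a a' ha ha' hd)⟩

lemma DrutuRelHyp.exists_contracting [GeodesicSpace Y] (hY : DrutuRelHyp Y P)
    (hf : SubexponentiallyDistorted f) : ∃ C ≥ 0, ∀ c ≥ 0, ∃ K ≥ 0, Contracting f P C c K := by
  obtain ⟨D, hD, hG⟩ := hY.exists_isShadowRel
  obtain ⟨C, hC, r, hr, hshadow⟩ := hY.exists_not_sameShadow hD
  refine ⟨C, hC, fun c hc => ?_⟩
  obtain ⟨K, hK, hmorse⟩ := hG.exists_dist_le_of_qGeodPath hf hc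
  refine ⟨2 * r + K, by positivity, fun k a b γ p q hab hγ hp hq hpq => ⟨?_, ?_⟩⟩
  · exact hmorse a b γ hab hγ p r hr (hshadow k _ _ p q hp hq hpq)
  · exact hmorse a b γ hab hγ q r hr fun h =>
      hshadow k _ _ q p hq hp (dist_comm p q ▸ hpq) h.symm

namespace Contracting

variable {γ : ℝ → X} {a b H : ℝ} {k : ι} {p : Y}

lemma dist_proj_start_le (h : Contracting f P C c K) (hab : a ≤ b) (hγ : QGeodPath c a b γ)
    (hH : 0 ≤ H) (hp : IsCoarseProj (P k) 1 (f (γ a)) p) (hb : f (γ b) ∈ cthickening H (P k)) :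
    (∃ u ∈ Icc a b, dist p (f (γ u)) ≤ K) ∨ dist p (f (γ b)) ≤ C + H + 1 := by
  obtain ⟨q, hq⟩ := exists_isCoarseProj ⟨p, hp.1⟩ (f (γ b))
  rcases le_total C (dist p q) with hfar | hnear
  · exact .inl (h k a b γ p q hab hγ hp hq hfar).1
  · exact .inr (by linarith [hq.dist_le hH hb, dist_triangle_right p (f (γ b)) q])

lemma dist_proj_end_le (h : Contracting f P C c K) (hab : a ≤ b) (hγ : QGeodPath c a b γ)
    (hH : 0 ≤ H) (ha : f (γ a) ∈ cthickening H (P k)) (hp : IsCoarseProj (P k) 1 (f (γ b)) p) :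
    (∃ u ∈ Icc a b, dist p (f (γ u)) ≤ K) ∨ dist p (f (γ a)) ≤ C + H + 1 := by
  obtain ⟨q, hq⟩ := exists_isCoarseProj ⟨p, hp.1⟩ (f (γ a))
  rcases le_total C (dist q p) with hfar | hnear
  · exact .inl (h k a b γ q p hab hγ hq hp hfar).2
  · right
    linarith [hq.dist_le hH ha, dist_triangle_left p (f (γ a)) q, dist_comm q (f (γ a))]

lemma exists_quasiconvex (h : Contracting f P C c K) (hf : SubexponentiallyDistorted f)
    (hc : 0 ≤ c) (hK : 0 ≤ K) : ∃ K₀ ≥ 0, ∀ H ≥ 0, ∃ R ≥ 0, ∀ k a b γ, QGeodPath c a b γ →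
      f (γ a) ∈ cthickening H (P k) → f (γ b) ∈ cthickening H (P k) →
        ∀ t, a + R ≤ t → t ≤ b - R → f (γ t) ∈ cthickening K₀ (P k) := by
  obtain ⟨R₁, hR₁, hproper₁⟩ := hf.exists_dist_le (2 * K)
  obtain ⟨L, hL, hlip⟩ := hf.1
  refine ⟨K + (L * (R₁ + 2 * c) + L), by positivity, fun H hH => ?_⟩
  obtain ⟨R₂, hR₂, hproper₂⟩ := hf.exists_dist_le (2 * max K (C + H + 1))
  refine ⟨R₂ + c + 1, by positivity, fun k a b γ hγ ha hb t hat htb => ?_⟩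
  have hγl : QGeodPath c a t γ := hγ.mono le_rfl (by linarith)
  have hγr : QGeodPath c t b γ := hγ.mono (by linarith) le_rfl
  obtain ⟨p, hp⟩ := exists_isCoarseProj (nonempty_of_mem_cthickening ha) (f (γ t))
  -- Points on both sides of `t` with images close to `p` are too close together if one of them is
  -- an endpoint.
  have hclose : ∀ u v, a ≤ u → u ≤ v → v ≤ b → dist p (f (γ u)) ≤ max K (C + H + 1) →
      dist p (f (γ v)) ≤ max K (C + H + 1) → v - u ≤ R₂ + c := fun u v hau huv hvb hu hv => by
    linarith [hγ.le_dist hau huv hvb, hproper₂ (γ u) (γ v)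
      (by linarith [dist_triangle_left (f (γ u)) (f (γ v)) p])]
  rcases h.dist_proj_end_le (by linarith) hγl hH ha hp with ⟨u, hu, hpu⟩ | hpa <;>
    rcases h.dist_proj_start_le (by linarith) hγr hH hp hb with ⟨v, hv, hpv⟩ | hpb
  · have huv := hproper₁ (γ u) (γ v) (by linarith [dist_triangle_left (f (γ u)) (f (γ v)) p])
    have hut : dist (γ u) (γ t) ≤ R₁ + 2 * c := by
      linarith [hγ.le_dist hu.1 (hu.2.trans hv.1) hv.2, hγl.dist_le hu.1 hu.2 le_rfl, hv.1]
    refine mem_cthickening_of_dist_le _ p _ _ hp.1 ?_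
    have himage : dist (f (γ u)) (f (γ t)) ≤ L * (R₁ + 2 * c) + L :=
      (hlip _ _).trans (by gcongr)
    linarith [dist_triangle_left (f (γ t)) p (f (γ u)), dist_comm p (f (γ u))]
  · linarith [hclose u b hu.1 (by linarith [hu.2]) le_rfl (le_max_of_le_left hpu)
      (le_max_of_le_right hpb), hu.2]
  · linarith [hclose a v le_rfl (by linarith [hv.1]) hv.2 (le_max_of_le_right hpa)
      (le_max_of_le_left hpv), hv.1]
  · linarith [hclose a b le_rfl (by linarith) le_rfl (le_max_of_le_right hpa)
      (le_max_of_le_right hpb)]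

lemma exists_preimagesStabilize [GeodesicSpace X] (h : Contracting f P C 0 K)
    (hf : SubexponentiallyDistorted f) (hK : 0 ≤ K) : ∃ ρ ≥ 0, PreimagesStabilize f P ρ := by
  obtain ⟨K₀, hK₀, hconv⟩ := h.exists_quasiconvex hf le_rfl hK
  refine ⟨K₀, hK₀, fun H hH => ?_⟩
  obtain ⟨R, hR, hconv⟩ := hconv H hH
  refine ⟨R, hR, fun k a a' ha ha' hd => ?_⟩
  obtain ⟨γ, hγ⟩ := GeodesicSpace.exists_geod a a'
  rw [← hγ.1] at ha
  rw [← hγ.2.1] at ha'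
  refine mem_cthickening_of_dist_le a (γ R) R _ ?_ (hγ.dist_left ⟨hR, by linarith⟩).le
  exact hconv k 0 _ γ (hγ.geodesicOn.qGeodPath le_rfl) ha ha' R (by linarith) (by linarith)

end Contracting

end Contraction

section Pullback

variable {X Y : Type*} [MetricSpace X] [MetricSpace Y] {f : X → Y} {ι : Type*} {P : ι → Set Y}
  {C c K ρ : ℝ}

lemma CoarselyLipschitz.exists_mem_cthickening (hf : CoarselyLipschitz f) {σ : ℝ} (hρ : 0 ≤ ρ)
    (hσ : 0 ≤ σ) : ∃ H ≥ 0, ∀ A x, x ∈ cthickening σ (f ⁻¹' cthickening ρ A) →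
      f x ∈ cthickening H A := by
  obtain ⟨L, hL, hlip⟩ := hf
  refine ⟨ρ + (L * (σ + 1) + L), by positivity, fun A x hx => ?_⟩
  obtain ⟨x', hx', hd⟩ := exists_dist_le_add_one_of_mem_cthickening hx hσ
  refine mem_cthickening_of_mem_of_dist_le hx' hρ ((hlip _ _).trans ?_) le_rfl
  rw [dist_comm]
  gcongr

lemma DrutuRelHyp.exists_ediam_inter_preimage_le (hY : DrutuRelHyp Y P)
    (hf : SubexponentiallyDistorted f) (hρ : 0 ≤ ρ) (hK : 0 ≤ K) : ∃ B ≥ 0, ∀ i j,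
      f ⁻¹' cthickening ρ (P i) ≠ f ⁻¹' cthickening ρ (P j) →
        ediam (cthickening K (f ⁻¹' cthickening ρ (P i)) ∩
          cthickening K (f ⁻¹' cthickening ρ (P j))) ≤ ENNReal.ofReal B := by
  obtain ⟨H, -, hmem⟩ := hf.1.exists_mem_cthickening hρ hK
  obtain ⟨B, -, hinter⟩ := hY.exists_dist_le_of_mem_inter H
  obtain ⟨R, hR, hproper⟩ := hf.exists_dist_le B
  refine ⟨R, hR, fun i j hij => ediam_le fun x hx y hy => ?_⟩
  rw [edist_dist]
  have hPij : P i ≠ P j := fun h => hij (by rw [h])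
  exact ENNReal.ofReal_le_ofReal (hproper x y (hinter i j hPij
    _ ⟨hmem _ x hx.1, hmem _ x hx.2⟩ _ ⟨hmem _ y hy.1, hmem _ y hy.2⟩))

namespace Contracting

lemma exists_dist_proj_le [GeodesicSpace X] (h : Contracting f P C 0 K) (hC : 0 ≤ C) (hK : 0 ≤ K)
    (hρ : 0 ≤ ρ) {e : ℝ} (he : 0 ≤ e) {k : ι} {x : X} {p : Y}
    (hx : x ∈ cthickening e (f ⁻¹' cthickening ρ (P k))) (hp : IsCoarseProj (P k) 1 (f x) p) :
    ∃ u, dist x u ≤ e + 1 ∧ dist p (f u) ≤ C + K + ρ + 1 := by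
  obtain ⟨x', hx', hd⟩ := exists_dist_le_add_one_of_mem_cthickening hx he
  obtain ⟨η, hη⟩ := GeodesicSpace.exists_geod x x'
  rcases h.dist_proj_start_le dist_nonneg (hη.geodesicOn.qGeodPath le_rfl) hρ
    (by rwa [hη.1]) (by rwa [hη.2.1]) with ⟨u, hu, hpu⟩ | hpx'
  · exact ⟨η u, by linarith [hη.dist_left hu, hu.2], by linarith⟩
  · exact ⟨x', hd, by rw [hη.2.1] at hpx'; linarith⟩

lemma exists_geodesicsVisit_preimage [GeodesicSpace X] (h : Contracting f P C 0 K)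
    (hf : SubexponentiallyDistorted f) (hC : 0 ≤ C) (hK : 0 ≤ K) (hKρ : K ≤ ρ) :
    ∃ M ≥ 0, ∀ k, GeodesicsVisit (1 / 8) M (f ⁻¹' cthickening ρ (P k)) := by
  have hρ : 0 ≤ ρ := hK.trans hKρ
  obtain ⟨R, hR, hproper⟩ := hf.exists_dist_le (2 * (C + K + ρ + 1) + C)
  refine ⟨2 * (R + 2), by positivity, fun k γ a b e hab hγ he ha hb => ?_⟩
  replace ha := cthickening_mono he _ ha
  replace hb := cthickening_mono he _ hb
  have hlen : 0 ≤ 1 / 8 * (b - a) := by linarith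
  obtain ⟨a', ha', -⟩ := exists_dist_le_add_one_of_mem_cthickening ha hlen
  obtain ⟨p, hp⟩ := exists_isCoarseProj (nonempty_of_mem_cthickening ha') (f (γ a))
  obtain ⟨q, hq⟩ := exists_isCoarseProj (nonempty_of_mem_cthickening ha') (f (γ b))
  rcases le_total C (dist p q) with hfar | hnear
  · obtain ⟨⟨u, hu, hpu⟩, -⟩ := h k a b γ p q hab (hγ.qGeodPath le_rfl) hp hq hfar
    exact ⟨u, hu, self_subset_cthickening _ <| mem_cthickening_of_dist_le _ p _ _ hp.1
      (by rw [dist_comm]; exact hpu.trans hKρ)⟩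
  · obtain ⟨u, hau, hpu⟩ := h.exists_dist_proj_le hC hK hρ hlen ha hp
    obtain ⟨v, hbv, hqv⟩ := h.exists_dist_proj_le hC hK hρ hlen hb hq
    have huv := hproper u v
      (by linarith [dist_triangle4 (f u) p q (f v), dist_comm p (f u)])
    have hshort : b - a ≤ 2 * (R + 2) := by
      linarith [dist_triangle4 (γ a) u v (γ b), dist_comm v (γ b), hγ.dist_eq le_rfl hab le_rfl]
    exact ⟨a, ⟨le_rfl, hab⟩, cthickening_mono (by linarith) _ ha⟩

lemma exists_sub_le_of_avoids (h : Contracting f P C c K) (hf : SubexponentiallyDistorted f)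
    (hstab : PreimagesStabilize f P ρ) (hc : 0 ≤ c) (hK : 0 ≤ K) : ∃ σ₀ ≥ 0, ∀ H ≥ 0,
      ∃ L ≥ 0, ∀ σ ≥ σ₀, ∀ k a b γ, QGeodPath c a b γ → f (γ a) ∈ cthickening H (P k) →
        f (γ b) ∈ cthickening H (P k) →
        (∀ t ∈ Ico a b, γ t ∉ cthickening σ (f ⁻¹' cthickening ρ (P k))) → b - a ≤ L := by
  obtain ⟨K₀, hK₀, hconv⟩ := h.exists_quasiconvex hf hc hK
  obtain ⟨σ₀, hσ₀, hstab⟩ := hstab K₀ hK₀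
  refine ⟨σ₀, hσ₀, fun H hH => ?_⟩
  obtain ⟨R, hR, hconv⟩ := hconv H hH
  refine ⟨2 * R + 2 * σ₀ + c, by positivity, fun σ hσ k a b γ hγ ha hb havoid => ?_⟩
  by_contra! hlong
  have hl := hconv k a b γ hγ ha hb (a + R) le_rfl (by linarith)
  have hr := hconv k a b γ hγ ha hb (b - R) (by linarith) le_rfl
  have hdist : 2 * σ₀ ≤ dist (γ (a + R)) (γ (b - R)) := by
    linarith [hγ.le_dist (s := a + R) (t := b - R) (by linarith) (by linarith) (by linarith)]
  exact havoid (a + R) ⟨by linarith, by linarith⟩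
    (cthickening_mono hσ _ (hstab k _ _ hl hr hdist))

lemma exists_dist_proj_entry_le (h : Contracting f P C c K) (hf : SubexponentiallyDistorted f)
    (hstab : PreimagesStabilize f P ρ) (hρ : 0 ≤ ρ) (hC : 0 ≤ C) (hc : 0 ≤ c) (hK : 0 ≤ K) :
    ∃ σ₀ ≥ 0, ∀ σ ≥ σ₀, ∃ B ≥ 0, ∀ k b γ p t₀, QGeodPath c 0 b γ →
      IsLeast {t ∈ Icc 0 b | γ t ∈ cthickening σ (f ⁻¹' cthickening ρ (P k))} t₀ →
        IsCoarseProj (P k) 1 (f (γ 0)) p → dist p (f (γ t₀)) ≤ B := by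
  obtain ⟨σ₀, hσ₀, havoid⟩ := h.exists_sub_le_of_avoids hf hstab hc hK
  refine ⟨σ₀, hσ₀, fun σ hσ => ?_⟩
  obtain ⟨H, hH, hmem⟩ := hf.1.exists_mem_cthickening hρ (hσ₀.trans hσ)
  obtain ⟨T, hT, havoid⟩ := havoid (max K H) (le_max_of_le_left hK)
  obtain ⟨L, hL, hlip⟩ := hf.1
  refine ⟨C + H + 1 + K + (L * (T + c) + L), by positivity, ?_⟩
  rintro k b γ p t₀ hγ ⟨⟨ht₀, ht₀mem⟩, hfirst⟩ hp
  have hγ₀ : QGeodPath c 0 t₀ γ := hγ.mono le_rfl ht₀.2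
  have ht₀H := hmem _ _ ht₀mem
  have hLT : 0 ≤ L * (T + c) + L := by positivity
  rcases h.dist_proj_start_le ht₀.1 hγ₀ hH hp ht₀H with ⟨u, hu, hpu⟩ | hpt₀
  · have huK : f (γ u) ∈ cthickening K (P k) :=
      mem_cthickening_of_dist_le _ p _ _ hp.1 (dist_comm p _ ▸ hpu)
    have hlen := havoid σ hσ k u t₀ γ (hγ₀.mono hu.1 le_rfl)
      (cthickening_mono (le_max_left K H) _ huK) (cthickening_mono (le_max_right K H) _ ht₀H)
      fun t ht htmem => ht.2.not_ge
        (hfirst ⟨⟨hu.1.trans ht.1, ht.2.le.trans ht₀.2⟩, htmem⟩)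
    have himage : dist (f (γ u)) (f (γ t₀)) ≤ L * (T + c) + L := by
      refine (hlip _ _).trans ?_
      gcongr
      linarith [hγ₀.dist_le hu.1 hu.2 le_rfl]
    linarith [dist_triangle p (f (γ u)) (f (γ t₀))]
  · linarith

lemma exists_dist_exit_entry_le (h : Contracting f P C c K) (hf : SubexponentiallyDistorted f)
    (hstab : PreimagesStabilize f P ρ) (hρ : 0 ≤ ρ) (hC : 0 ≤ C) (hc : 0 ≤ c) (hK : 0 ≤ K) :
    ∃ σ₀ ≥ 0, ∀ σ ≥ σ₀, ∃ δ ≥ 0, ∀ k b γ b' γ', QGeodPath c 0 b γ → QGeodPath c 0 b' γ' →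
      γ b = γ' 0 → (∃ t ∈ Icc 0 b, γ t ∈ cthickening σ (f ⁻¹' cthickening ρ (P k))) →
      (∃ t ∈ Icc 0 b', γ' t ∈ cthickening σ (f ⁻¹' cthickening ρ (P k))) →
      dist (γ (exitTime γ 0 b (cthickening σ (f ⁻¹' cthickening ρ (P k)))))
        (γ' (entryTime γ' 0 b' (cthickening σ (f ⁻¹' cthickening ρ (P k))))) ≤ δ := by
  obtain ⟨σ₀, hσ₀, hentry⟩ := h.exists_dist_proj_entry_le hf hstab hρ hC hc hK
  refine ⟨σ₀, hσ₀, fun σ hσ => ?_⟩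
  obtain ⟨B, -, hentry⟩ := hentry σ hσ
  obtain ⟨δ, hδ, hproper⟩ := hf.exists_dist_le (2 * B)
  refine ⟨δ, hδ, fun k b γ b' γ' hγ hγ' hend hmeet hmeet' => ?_⟩
  obtain ⟨⟨hs, hsmem⟩, hlast⟩ := isGreatest_exitTime hγ.1 isClosed_cthickening hmeet
  have hfirst := isLeast_entryTime hγ'.1 isClosed_cthickening hmeet'
  set A := cthickening σ (f ⁻¹' cthickening ρ (P k))
  obtain ⟨x, hx⟩ := nonempty_of_mem_cthickening hsmem
  obtain ⟨p, hp⟩ := exists_isCoarseProj (nonempty_of_mem_cthickening hx) (f (γ b))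
  have hexit := hentry k b (fun t => γ (b - t)) p (b - exitTime γ 0 b A) hγ.reverse
    ⟨⟨⟨by linarith [hs.2], by linarith [hs.1]⟩, by simpa only [sub_sub_cancel] using hsmem⟩,
      fun t ht => by
        linarith [hlast ⟨⟨by linarith [ht.1.2], by linarith [ht.1.1]⟩, ht.2⟩]⟩
    (by rwa [sub_zero])
  rw [hend] at hp
  have hentry' := hentry k b' γ' p _ hγ' hfirst hp
  simp only [sub_sub_cancel] at hexit
  exact hproper _ _ ((dist_triangle_left _ _ p).trans (by linarith))

end Contracting

end Pullback

section GromovProducts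

variable {Y : Type*} [MetricSpace Y] {w w' x y m n : Y} {E F : ℝ}

lemma gromovProd_comm (w x y : Y) : gromovProd w x y = gromovProd w y x := by
  simp only [gromovProd, dist_comm x y, add_comm (dist w x)]

lemma gromovProd_le_of_dist_le (h : gromovProd w x y ≤ E) (hw : dist w w' ≤ F) :
    gromovProd w' x y ≤ E + F := by
  rw [gromovProd] at h ⊢
  linarith [dist_triangle_left w' x w, dist_triangle_left w' y w]

lemma add_sub_le_dist_of_gromovProd_le (h : gromovProd w x y ≤ E) (hm : gromovProd m w x ≤ 0)
    (hn : gromovProd n w y ≤ 0) : dist w m + dist w n - 2 * E ≤ dist m n := by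
  simp only [gromovProd, dist_comm m w, dist_comm n w] at h hm hn
  linarith [dist_triangle4 x m n y, dist_comm x m]

lemma gromovProd_le_zero_trans (hm : gromovProd m w n ≤ 0) (hn : gromovProd n w x ≤ 0) :
    gromovProd m w x ≤ 0 := by
  simp only [gromovProd, dist_comm n w] at hm hn ⊢
  linarith [dist_triangle m n x]

end GromovProducts

section Tripods

variable {Y : Type*} [MetricSpace Y] {ι : Type*} {P : ι → Set Y} {D H E L : ℝ}

lemma eq_or_eq_add_one_or_eq_add_two (i j : Fin 3) : j = i ∨ j = i + 1 ∨ j = i + 2 := by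
  revert i j
  decide

lemma add_one_add_one (i : Fin 3) : i + 1 + 1 = i + 2 := by
  revert i
  decide

lemma add_two_add_one (i : Fin 3) : i + 2 + 1 = i := by
  revert i
  decide

/-- The coarse projections of `x` and `y` to `A` are at distance at least `L`. -/
def ProjectionsApart (A : Set Y) (L : ℝ) (x y : Y) : Prop :=
  ∀ p q, IsCoarseProj A 1 x p → IsCoarseProj A 1 y q → L ≤ dist p q

lemma ProjectionsApart.symm {A : Set Y} {x y : Y} (h : ProjectionsApart A L x y) :
    ProjectionsApart A L y x := fun p q hp hq => dist_comm q p ▸ h q p hq hp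

/-- The point `w` lies `E`-close to being on all three sides of the triangle with vertices `x i`. -/
def IsCoarseCentre (E : ℝ) (w : Y) (x : Fin 3 → Y) : Prop :=
  ∀ i, gromovProd w (x i) (x (i + 1)) ≤ E

/-- The three points `x i` have pairwise `L`-distant projections to one of the sets `P k`. -/
def PeripheralTriple (P : ι → Set Y) (L : ℝ) (x : Fin 3 → Y) : Prop :=
  ∃ k, (P k).Nonempty ∧ ∀ i, ProjectionsApart (P k) L (x i) (x (i + 1))

namespace DrutuRelHyp

variable [GeodesicSpace Y]

lemma exists_between_dist_proj_le (hY : DrutuRelHyp Y P) (hH : 0 ≤ H) : ∃ C ≥ 0,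
    ∀ k w x v p, v ∈ cthickening H (P k) → gromovProd v w x ≤ 0 → IsCoarseProj (P k) 1 x p →
      ∃ m, gromovProd m w x ≤ 0 ∧ dist w v ≤ dist w m ∧ dist m p ≤ C := by
  obtain ⟨C, hC, hproj⟩ := hY.exists_dist_proj_start_le hH zero_le_one
  refine ⟨C, hC, fun k w x v p hv hvwx hp => ?_⟩
  obtain ⟨ζ, hζ⟩ := GeodesicSpace.exists_geod x v
  obtain ⟨s, hs, hsp⟩ := hproj k ζ (dist x v) p dist_nonneg hζ.geodesicOn (by rwa [hζ.1])
    (by rwa [hζ.2.1])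
  have hxs := hζ.dist_left hs
  have hsv := hζ.dist_right hs
  simp only [gromovProd, dist_comm v w, dist_comm v x] at hvwx
  refine ⟨ζ s, ?_, ?_, hsp⟩
  · rw [gromovProd, dist_comm (ζ s) x]
    linarith [dist_triangle (ζ s) v w, dist_comm v w]
  · linarith [dist_triangle_right w x (ζ s), hs.1, hs.2]

lemma exists_gromovProd_proj_le (hY : DrutuRelHyp Y P) (hH : 0 ≤ H) : ∃ C ≥ 0, ∀ k w x y p,
    w ∈ cthickening H (P k) → gromovProd w x y ≤ 0 → IsCoarseProj (P k) 1 x p →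
      gromovProd p x y ≤ C := by
  obtain ⟨C, hC, hbetween⟩ := hY.exists_between_dist_proj_le hH
  refine ⟨C, hC, fun k w x y p hw hwxy hp => ?_⟩
  obtain ⟨m, hm, -, hmp⟩ := hbetween k y x w p hw (gromovProd_comm w x y ▸ hwxy) hp
  rw [gromovProd_comm] at hm
  linarith [gromovProd_le_of_dist_le hm hmp]

lemma exists_isCoarseCentre_of_not_projectionsApart (hY : DrutuRelHyp Y P) (hH : 0 ≤ H)
    (hL : 0 ≤ L) : ∃ E ≥ 0, ∀ k (x : Fin 3 → Y),
      (∀ i, ∃ w ∈ cthickening H (P k), gromovProd w (x i) (x (i + 1)) ≤ 0) →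
        ∀ i, ¬ ProjectionsApart (P k) L (x i) (x (i + 1)) → ∃ w, IsCoarseCentre E w x := by
  obtain ⟨C, hC, hproj⟩ := hY.exists_gromovProd_proj_le hH
  refine ⟨C + L, by positivity, fun k x hsides i hnear => ?_⟩
  simp only [ProjectionsApart, not_forall, not_le] at hnear
  obtain ⟨p, q, hp, hq, hpq⟩ := hnear
  refine ⟨p, fun j => ?_⟩
  obtain ⟨w, hwk, hw⟩ := hsides j
  obtain rfl | rfl | rfl := eq_or_eq_add_one_or_eq_add_two i j
  · linarith [hproj k w _ _ p hwk hw hp]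
  · exact gromovProd_le_of_dist_le (hproj k w _ _ q hwk hw hq) (dist_comm p q ▸ hpq.le)
  · rw [add_two_add_one, gromovProd_comm] at hw ⊢
    linarith [hproj k w _ _ p hwk hw hp]

lemma exists_isCoarseCentre_or_peripheralTriple (hY : DrutuRelHyp Y P) (hL : 0 ≤ L) :
    ∃ E ≥ 0, ∀ x : Fin 3 → Y, (∃ w, IsCoarseCentre E w x) ∨ PeripheralTriple P L x := by
  obtain ⟨D, hD, htri⟩ := hY.exists_thin_geodesic_triangles
  obtain ⟨E, hE, hcentre⟩ := hY.exists_isCoarseCentre_of_not_projectionsApart hD hL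
  refine ⟨E + D, by positivity, fun x => ?_⟩
  obtain ⟨γ, hγ⟩ := GeodesicSpace.exists_geod (x 0) (x 1)
  obtain ⟨η, hη⟩ := GeodesicSpace.exists_geod (x 0) (x 2)
  obtain ⟨ζ, hζ⟩ := GeodesicSpace.exists_geod (x 1) (x 2)
  have hηprod : ∀ t ∈ Icc 0 (dist (x 0) (x 2)), gromovProd (η t) (x 2) (x 0) ≤ 0 := fun t ht =>
    (gromovProd_comm _ _ _).trans_le (hη.gromovProd_eq_zero ht).le
  have htri := htri γ _ η _ ζ (hγ.hinge hη) (by rwa [hγ.2.1, hη.2.1])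
  rw [hγ.2.1, hη.2.1] at htri
  rcases htri with ⟨s, hs, t, ht, u, hu, hst, hsu, -⟩ |
    ⟨k, ⟨s, hs, t, ht, hsk, htk, -⟩, ⟨-, -, u, hu, -, huk, -⟩, -⟩
  · refine .inl ⟨γ s, Fin.forall_fin_succ.2 ⟨?_, Fin.forall_fin_two.2 ⟨?_, ?_⟩⟩⟩
    · exact (hγ.gromovProd_eq_zero hs).trans_le (by positivity)
    · exact (gromovProd_le_of_dist_le (hζ.gromovProd_eq_zero hu).le
        (dist_comm (γ s) _ ▸ hsu)).trans (by linarith)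
    · exact (gromovProd_le_of_dist_le (hηprod t ht) (dist_comm (γ s) _ ▸ hst)).trans
        (by linarith)
  · by_cases hapart : ∀ i, ProjectionsApart (P k) L (x i) (x (i + 1))
    · exact .inr ⟨k, nonempty_of_mem_cthickening hsk, hapart⟩
    obtain ⟨i, hi⟩ := not_forall.1 hapart
    obtain ⟨w, hw⟩ := hcentre k x (Fin.forall_fin_succ.2 ⟨⟨γ s, hsk, (hγ.gromovProd_eq_zero hs).le⟩,
      Fin.forall_fin_two.2 ⟨⟨ζ u, huk, (hζ.gromovProd_eq_zero hu).le⟩, η t, htk, hηprod t ht⟩⟩) i hi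
    exact .inl ⟨w, fun j => (hw j).trans (by linarith)⟩

lemma exists_projectionsApart_of_visits (hY : DrutuRelHyp Y P) (hD : 0 ≤ D) (hE : 0 ≤ E)
    (hL : 0 ≤ L) : ∃ A ≥ 0, ∀ k w x y u v, gromovProd w x y ≤ E → u ∈ cthickening D (P k) →
      gromovProd u w x ≤ 0 → v ∈ cthickening D (P k) → gromovProd v w y ≤ 0 → A ≤ dist w v →
        ProjectionsApart (P k) L x y := by
  obtain ⟨C, hC, hbetween⟩ := hY.exists_between_dist_proj_le hD
  refine ⟨L + 2 * E + 2 * C, by positivity, ?_⟩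
  intro k w x y u v hxy hu hux hv hvy hA p q hp hq
  obtain ⟨m, hm, -, hmp⟩ := hbetween k w x u p hu hux hp
  obtain ⟨n, hn, hvn, hnq⟩ := hbetween k w y v q hv hvy hq
  linarith [add_sub_le_dist_of_gromovProd_le hxy hm hn, dist_triangle4 m p q n, dist_comm n q,
    dist_nonneg (x := w) (y := m)]

/-- If the projections of `y` and `z` were close, the projection of `y` would also be a projection
of `w`, hence close to `[w, u]`; but `[w, u]` and `[w, y]` diverge before the latter reaches the
projection of `y`. -/
lemma exists_projectionsApart_third_of_visits (hY : DrutuRelHyp Y P) (hD : 0 ≤ D) (hE : 0 ≤ E)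
    (hL : 0 ≤ L) : ∃ A ≥ 0, ∀ k w x y z u v, gromovProd w x y ≤ E → gromovProd w y z ≤ E →
      u ∈ cthickening D (P k) → gromovProd u w x ≤ 0 → v ∈ cthickening D (P k) →
        gromovProd v w y ≤ 0 → A ≤ dist w v → ProjectionsApart (P k) L y z := by
  obtain ⟨C, hC, hbetween⟩ := hY.exists_between_dist_proj_le hD
  obtain ⟨C', hC', hstart⟩ := hY.exists_dist_proj_start_le (E := 1 + L + 2 * (E + C)) hD
    (by positivity)
  refine ⟨2 * E + C + C' + 1, by positivity, ?_⟩
  intro k w x y z u v hxy hyz hu hux hv hvy hA p q hp hq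
  by_contra! hpq
  obtain ⟨m, hm, hvm, hmp⟩ := hbetween k w y v p hv hvy hp
  have hpz : IsCoarseProj (P k) (1 + L) z p :=
    ⟨hp.1, by linarith [hq.2, dist_triangle_right z p q]⟩
  have hpw : IsCoarseProj (P k) (1 + L + 2 * (E + C)) w p := by
    refine hpz.of_gromovProd_le ?_
    simp only [gromovProd, dist_comm m w] at hyz hm ⊢
    linarith [dist_triangle w m p, dist_triangle4 y m p z, dist_comm y m, dist_comm p z]
  obtain ⟨ζ, hζ⟩ := GeodesicSpace.exists_geod w u
  obtain ⟨s, hs, hsp⟩ := hstart k ζ _ p dist_nonneg hζ.geodesicOn (by rwa [hζ.1])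
    (by rwa [hζ.2.1])
  have hsx := gromovProd_le_zero_trans (hζ.gromovProd_eq_zero hs).le hux
  linarith [add_sub_le_dist_of_gromovProd_le hxy hsx hm, dist_triangle_right (ζ s) m p,
    dist_nonneg (x := w) (y := ζ s)]

lemma exists_peripheralTriple_of_sameShadow (hY : DrutuRelHyp Y P) (hD : 0 ≤ D) (hE : 0 ≤ E)
    (hL : 0 ≤ L) : ∃ A ≥ 0, ∀ w (x : Fin 3 → Y), IsCoarseCentre E w x →
      ∀ i, SameShadow P D w A (x i) (x (i + 1)) → PeripheralTriple P L x := by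
  obtain ⟨A₁, hA₁, hpair⟩ := hY.exists_projectionsApart_of_visits hD hE hL
  obtain ⟨A₂, hA₂, hthird⟩ := hY.exists_projectionsApart_third_of_visits hD hE hL
  refine ⟨A₁ + A₂ + D + E + 1, by positivity, fun w x hw i hshadow => ?_⟩
  obtain ⟨γ, hγ⟩ := GeodesicSpace.exists_geod w (x i)
  obtain ⟨η, hη⟩ := GeodesicSpace.exists_geod w (x (i + 1))
  obtain ⟨s, hs, t, ht, hAs, hAt, hst⟩ := hshadow γ η hγ hη
  have hγs := (hγ.gromovProd_eq_zero hs).le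
  have hηt := (hη.gromovProd_eq_zero ht).le
  have hws := hγ.dist_left hs
  have hwt := hη.dist_left ht
  rcases hst with hst | ⟨k, hsk, htk⟩
  · linarith [add_sub_le_dist_of_gromovProd_le (hw i) hγs hηt]
  have hlast := hw (i + 2)
  rw [add_two_add_one, gromovProd_comm] at hlast
  have hmid : gromovProd w (x (i + 1)) (x (i + 2)) ≤ E := by
    simpa only [add_one_add_one] using hw (i + 1)
  refine ⟨k, nonempty_of_mem_cthickening hsk, fun j => ?_⟩
  obtain rfl | rfl | rfl := eq_or_eq_add_one_or_eq_add_two i j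
  · exact hpair k w _ _ _ _ (hw j) hsk hγs htk hηt (by linarith)
  · rw [add_one_add_one]
    exact hthird k w _ _ _ _ _ (hw i) hmid hsk hγs htk hηt (by linarith)
  · rw [add_two_add_one]
    exact (hthird k w _ _ _ _ _ (gromovProd_comm w _ _ ▸ hw i) hlast htk hηt hsk hγs
      (by linarith)).symm

end DrutuRelHyp

end Tripods

section Triangles

variable {X Y : Type*} [MetricSpace X] [MetricSpace Y] {f : X → Y} {ι : Type*} {P : ι → Set Y}
variable {γ : Fin 3 → ℝ → X} {b : Fin 3 → ℝ} {C H K c ρ : ℝ}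

/-- A triangle in `X` with continuous `(1, c)`-quasi-geodesic sides `γ i`, defined on `[0, b i]`;
its sides are indexed cyclically by `Fin 3`, where addition is modulo `3`. -/
structure QGeodTriangle (c : ℝ) (γ : Fin 3 → ℝ → X) (b : Fin 3 → ℝ) : Prop where
  nonneg : ∀ i, 0 ≤ b i
  qGeodPath : ∀ i, QGeodPath c 0 (b i) (γ i)
  end_eq : ∀ i, γ i (b i) = γ (i + 1) 0

lemma Contracting.exists_mem_cthickening_of_peripheralTriple (h : Contracting f P C c K)
    (hγ : QGeodTriangle c γ b) (hP : PeripheralTriple P C fun i => f (γ i 0)) :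
    ∃ k, ∀ i, ∃ t ∈ Icc 0 (b i), f (γ i t) ∈ cthickening K (P k) := by
  obtain ⟨k, hne, hapart⟩ := hP
  refine ⟨k, fun i => ?_⟩
  obtain ⟨p, hp⟩ := exists_isCoarseProj hne (f (γ i 0))
  obtain ⟨q, hq⟩ := exists_isCoarseProj hne (f (γ (i + 1) 0))
  obtain ⟨⟨t, ht, hpt⟩, -⟩ := h k 0 (b i) (γ i) p q (hγ.nonneg i) (hγ.qGeodPath i) hp
    (by rwa [hγ.end_eq]) (hapart i p q hp hq)
  exact ⟨t, ht, mem_cthickening_of_dist_le _ p _ _ hp.1 (by rwa [dist_comm])⟩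

lemma IsShadowRel.exists_common_ball {G : Y → ℝ → Y → Y → Prop} (hG : IsShadowRel G)
    (hf : SubexponentiallyDistorted f) (hc : 0 ≤ c) {r : ℝ} (hr : 0 ≤ r) :
    ∃ δ ≥ 0, ∀ (γ : Fin 3 → ℝ → X) b, QGeodTriangle c γ b →
      ∀ w, (∀ i, ¬ G w r (f (γ i 0)) (f (γ (i + 1) 0))) →
        ∃ v, ∀ i, ∃ t ∈ Icc 0 (b i), dist v (γ i t) ≤ δ := by
  obtain ⟨K, -, hnear⟩ := hG.exists_dist_le_of_qGeodPath hf hc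
  obtain ⟨δ, hδ, hproper⟩ := hf.exists_dist_le (2 * (2 * r + K))
  refine ⟨δ, hδ, fun γ b hγ w hw => ?_⟩
  choose t ht hwt using fun i => hnear 0 (b i) (γ i) (hγ.nonneg i) (hγ.qGeodPath i) w r hr
    (by rw [hγ.end_eq]; exact hw i)
  exact ⟨γ 0 (t 0), fun i => ⟨t i, ht i, hproper _ _ (by
    linarith [dist_triangle_left (f (γ 0 (t 0))) (f (γ i (t i))) w, hwt 0, hwt i])⟩⟩

lemma DrutuRelHyp.exists_common_ball_or_mem_cthickening [GeodesicSpace Y] (hY : DrutuRelHyp Y P)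
    (hf : SubexponentiallyDistorted f) (hc : 0 ≤ c) :
    ∃ K ≥ 0, ∃ δ ≥ 0, ∀ (γ : Fin 3 → ℝ → X) b, QGeodTriangle c γ b →
      (∃ w, ∀ i, ∃ t ∈ Icc 0 (b i), dist w (γ i t) ≤ δ) ∨
        ∃ k, ∀ i, ∃ t ∈ Icc 0 (b i), f (γ i t) ∈ cthickening K (P k) := by
  obtain ⟨D, hD, hG⟩ := hY.exists_isShadowRel
  obtain ⟨C, hC, hcontr⟩ := hY.exists_contracting hf
  obtain ⟨K, hK, hcontr⟩ := hcontr c hc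
  obtain ⟨E, hE, hcentre⟩ := hY.exists_isCoarseCentre_or_peripheralTriple hC
  obtain ⟨A, hA, hshadow⟩ := hY.exists_peripheralTriple_of_sameShadow hD hE hC
  obtain ⟨δ, hδ, hball⟩ := hG.exists_common_ball hf hc hA
  refine ⟨K, hK, δ, hδ, fun γ b hγ => ?_⟩
  rw [or_iff_not_imp_right]
  intro hP
  have hnot : ¬ PeripheralTriple P C fun i => f (γ i 0) :=
    fun h => hP (hcontr.exists_mem_cthickening_of_peripheralTriple hγ h)
  obtain ⟨w, hw⟩ := (hcentre fun i => f (γ i 0)).resolve_right hnot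
  exact hball γ b hγ w fun i hi => hnot (hshadow w _ hw i hi)

lemma PreimagesStabilize.exists_mem_or_dist_le (h : PreimagesStabilize f P ρ) (hH : 0 ≤ H) :
    ∃ R ≥ 0, ∀ k {κ : Type*} (a : κ → X), (∀ i, f (a i) ∈ cthickening H (P k)) →
      (∀ i, a i ∈ cthickening R (f ⁻¹' cthickening ρ (P k))) ∨ ∀ i j, dist (a i) (a j) ≤ R := by
  obtain ⟨R, hR, hstab⟩ := h H hH
  refine ⟨3 * R, by positivity, fun k κ a ha => ?_⟩
  by_cases hfar : ∃ i j, 2 * R ≤ dist (a i) (a j)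
  · obtain ⟨i, j, hij⟩ := hfar
    have hi := hstab k _ _ (ha i) (ha j) hij
    left
    intro l
    rcases le_total (2 * R) (dist (a l) (a i)) with hl | hl
    · exact cthickening_mono (by linarith) _ (hstab k _ _ (ha l) (ha i) hl)
    · exact mem_cthickening_of_mem_of_dist_le hi hR (dist_comm (a l) (a i) ▸ hl) (by linarith)
  · push Not at hfar
    exact .inr fun i j => by linarith [hfar i j]

lemma DrutuRelHyp.exists_common_ball_or_exit_entry_le [GeodesicSpace Y] (hY : DrutuRelHyp Y P)
    (hf : SubexponentiallyDistorted f) (hstab : PreimagesStabilize f P ρ) (hρ : 0 ≤ ρ)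
    (hc : 0 ≤ c) : ∃ σ ≥ 0, ∃ δ ≥ 0, ∀ (γ : Fin 3 → ℝ → X) b, QGeodTriangle c γ b →
      (∃ w, ∀ i, ∃ t ∈ Icc 0 (b i), dist w (γ i t) ≤ δ) ∨
        ∃ k, (∀ i, ∃ t ∈ Icc 0 (b i), γ i t ∈ cthickening σ (f ⁻¹' cthickening ρ (P k))) ∧
          ∀ i, dist (γ i (exitTime (γ i) 0 (b i) (cthickening σ (f ⁻¹' cthickening ρ (P k)))))
            (γ (i + 1) (entryTime (γ (i + 1)) 0 (b (i + 1))
              (cthickening σ (f ⁻¹' cthickening ρ (P k))))) ≤ δ := by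
  obtain ⟨H, hH, δ₁, hδ₁, hthin⟩ := hY.exists_common_ball_or_mem_cthickening hf hc
  obtain ⟨C, hC, hcontr⟩ := hY.exists_contracting hf
  obtain ⟨K, hK, hcontr⟩ := hcontr c hc
  obtain ⟨R, hR, hmeet⟩ := hstab.exists_mem_or_dist_le hH
  obtain ⟨σ₀, hσ₀, hexit⟩ := hcontr.exists_dist_exit_entry_le hf hstab hρ hC hc hK
  obtain ⟨δ₂, hδ₂, hexit⟩ := hexit (max σ₀ R) (le_max_left _ _)
  refine ⟨max σ₀ R, by positivity, δ₁ + R + δ₂, by positivity, fun γ b hγ => ?_⟩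
  rcases hthin γ b hγ with ⟨w, hw⟩ | ⟨k, hk⟩
  · refine .inl ⟨w, fun i => ?_⟩
    obtain ⟨t, ht, hwt⟩ := hw i
    exact ⟨t, ht, by linarith⟩
  choose t ht htP using hk
  rcases hmeet k (fun i => γ i (t i)) htP with hmem | hclose
  · have hside i : ∃ t ∈ Icc 0 (b i),
        γ i t ∈ cthickening (max σ₀ R) (f ⁻¹' cthickening ρ (P k)) :=
      ⟨t i, ht i, cthickening_mono (le_max_right _ _) _ (hmem i)⟩
    refine .inr ⟨k, hside, fun i => ?_⟩
    linarith [hexit k _ _ _ _ (hγ.qGeodPath i) (hγ.qGeodPath (i + 1)) (hγ.end_eq i) (hside i)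
      (hside (i + 1))]
  · exact .inl ⟨γ 0 (t 0), fun i => ⟨t i, ht i, by linarith [hclose 0 i]⟩⟩

lemma DrutuRelHyp.of_qGeodTriangle {Q : ι → Set X}
    (hinter : ∀ K : ℝ, 0 < K → ∃ B : ℝ, 0 ≤ B ∧ ∀ i j, Q i ≠ Q j →
      ediam (cthickening K (Q i) ∩ cthickening K (Q j)) ≤ ENNReal.ofReal B)
    (hvisit : ∃ ε ∈ Ioo (0 : ℝ) (1 / 2), ∃ M ≥ 0, ∀ k, GeodesicsVisit ε M (Q k))
    (hthin : ∀ c ≥ 0, ∃ σ ≥ 0, ∃ δ ≥ 0, ∀ (γ : Fin 3 → ℝ → X) b, QGeodTriangle c γ b →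
      (∃ w, ∀ i, ∃ t ∈ Icc 0 (b i), dist w (γ i t) ≤ δ) ∨
        ∃ k, (∀ i, ∃ t ∈ Icc 0 (b i), γ i t ∈ cthickening σ (Q k)) ∧
          ∀ i, dist (γ i (exitTime (γ i) 0 (b i) (cthickening σ (Q k))))
            (γ (i + 1) (entryTime (γ (i + 1)) 0 (b (i + 1)) (cthickening σ (Q k)))) ≤ δ) :
    DrutuRelHyp X Q where
  bdd_intersections := hinter
  geod_near := by
    obtain ⟨ε, hε, M, hM, hvisit⟩ := hvisit
    refine ⟨ε, hε, M, hM, fun k x y hx hy γ hγ => ?_⟩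
    exact hvisit k γ 0 (dist x y) _ dist_nonneg hγ.geodesicOn (by rw [sub_zero])
      (by rwa [hγ.1]) (by rwa [hγ.2.1])
  thin_triangles := by
    intro c hc
    obtain ⟨σ, hσ, δ, hδ, hthin⟩ := hthin c hc
    refine ⟨σ, δ, hσ, hδ, ?_⟩
    intro x y z b₁ b₂ b₃ γ₁ γ₂ γ₃ hb₁ hb₂ hb₃ hγ₁ hγ₂ hγ₃ hx hy hy' hz hz' hx'
    have hγ : QGeodTriangle c ![γ₁, γ₂, γ₃] ![b₁, b₂, b₃] := by
      constructor <;> simp [Fin.forall_fin_succ, *]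
    simpa [Fin.forall_fin_succ, and_assoc] using hthin _ _ hγ

end Triangles

/-- **Theorem 4.1.** If `f : X → Y` is a subexponentially distorted embedding
and `Y` is hyperbolic relative to the collection of subsets `P i`, then there
is `ρ₀ ≥ 0` such that for all `ρ ≥ ρ₀` the space `X` is hyperbolic relative to
the collection `{f⁻¹(N_ρ(P i))}`. -/
theorem subexp_distorted_pullback_relHyp
    {X : Type u} {Y : Type v} [MetricSpace X] [MetricSpace Y]
    [GeodesicSpace X] [GeodesicSpace Y] {ι : Type w} (P : ι → Set Y)
    (hY : DrutuRelHyp Y P) (f : X → Y) (hf : SubexponentiallyDistorted f) :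
    ∃ ρ₀ : ℝ, 0 ≤ ρ₀ ∧ ∀ ρ : ℝ, ρ₀ ≤ ρ →
      DrutuRelHyp X (fun i => f ⁻¹' Metric.cthickening ρ (P i)) := by
  obtain ⟨C, hC, hcontr⟩ := hY.exists_contracting hf
  obtain ⟨K, hK, hcontr⟩ := hcontr 0 le_rfl
  obtain ⟨ρ₁, -, hstab⟩ := hcontr.exists_preimagesStabilize hf hK
  refine ⟨max K ρ₁, by positivity, fun ρ hρ => ?_⟩
  obtain ⟨hKρ, hρ₁ρ⟩ := max_le_iff.mp hρ
  have hρ0 : 0 ≤ ρ := hK.trans hKρ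
  obtain ⟨M, hM, hvisit⟩ := hcontr.exists_geodesicsVisit_preimage hf hC hK hKρ
  exact .of_qGeodTriangle
    (fun H hH => hY.exists_ediam_inter_preimage_le hf hρ0 hH.le)
    ⟨1 / 8, by norm_num, M, hM, hvisit⟩
    (fun c hc => hY.exists_common_ball_or_exit_entry_le hf (hstab.mono hρ₁ρ) hρ0 hc)

end RelHypPaper
end
end

section
/- There is a universal constant K with the following property. Let Γ be a connected graph with vertex set V, all edges of length one, and path metric d_Γ, and let ℋ(Γ) be the combinatorial horoball over Γ with its path metric d_ℋ. Then for all (x,m),(y,n)∈V×ℕ, |d_ℋ((x,m),(y,n)) − (2·log(d_Γ(x,y)·e^{−max{m,n}}+1) + |m−n|)| ≤ K. -/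
/-!
A path that climbs, crosses and comes back down is shortest: `d_ℋ((x,m),(y,n))` is exactly the
infimum over heights `h` of `|m - h| + d_Γ(x,y) e^{-h} + |h - n|`. Indeed this infimum vanishes at
the starting point and grows along each edge by at most the length of that edge.
Only heights `h = max{m,n} + t` with `t ≥ 0` matter, and there the sum is
`|m - n| + 2 t + s e^{-t}` with `s = d_Γ(x,y) e^{-max{m,n}}`, which up to a bounded error is
minimal at `t = log (s + 1)`, where crossing costs at most `1`.
-/

noncomputable section

open Classical

namespace RelHypPaper

/-- the weight of a potential edge of the combinatorial horoball `ℋ(Γ)` over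
the graph `Γ`: vertical edges `((v,n),(v,n+1))` have length `1`, horizontal
edges `((v,n),(v',n))` with `v ~ v'` have length `exp (-n)`, and all other
pairs are non-adjacent (weight `∞`). -/
def horoWeight {V : Type*} (Γ : SimpleGraph V) (p q : V × ℕ) : ENNReal :=
  if p.1 = q.1 ∧ (p.2 + 1 = q.2 ∨ q.2 + 1 = p.2) then 1
  else if p.2 = q.2 ∧ Γ.Adj p.1 q.1 then ENNReal.ofReal (Real.exp (-(p.2 : ℝ)))
  else ⊤

/-- the path metric of the combinatorial horoball `ℋ(Γ)`: the infimum of the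
total weight over all finite chains of edges joining the two vertices. -/
def horoDist {V : Type*} (Γ : SimpleGraph V) (p q : V × ℕ) : ENNReal :=
  ⨅ (n : ℕ) (c : ℕ → V × ℕ) (_ : c 0 = p) (_ : c n = q),
    ∑ i ∈ Finset.range n, horoWeight Γ (c i) (c (i + 1))

universe u

section

variable {V : Type*} {Γ : SimpleGraph V}

theorem horoWeight_succ_right (v : V) (n : ℕ) : horoWeight Γ (v, n) (v, n + 1) = 1 := by
  simp [horoWeight]

theorem horoWeight_succ_left (v : V) (n : ℕ) : horoWeight Γ (v, n + 1) (v, n) = 1 := by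
  simp [horoWeight]

theorem horoWeight_of_adj {x y : V} (hxy : Γ.Adj x y) (n : ℕ) :
    horoWeight Γ (x, n) (y, n) = ENNReal.ofReal (Real.exp (-n)) := by
  simp [horoWeight, hxy]

theorem horoDist_self (p : V × ℕ) : horoDist Γ p p = 0 :=
  nonpos_iff_eq_zero.1 <| iInf₂_le_of_le 0 (fun _ => p) <| iInf₂_le_of_le rfl rfl (by simp)

theorem horoDist_le_add_horoWeight (p q r : V × ℕ) :
    horoDist Γ p r ≤ horoDist Γ p q + horoWeight Γ q r := by
  conv_rhs => rw [horoDist]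
  simp only [ENNReal.iInf_add]
  refine le_iInf₂ fun n c => le_iInf₂ fun h_start h_end => ?_
  refine iInf₂_le_of_le (n + 1) (fun i => if i ≤ n then c i else r) <|
    iInf₂_le_of_le (by simp [h_start]) (by simp) ?_
  rw [Finset.sum_range_succ]
  gcongr with i hi
  · have hi' : i < n := Finset.mem_range.1 hi
    simp [hi'.le, Nat.succ_le_iff.2 hi']
  · simp [h_end]

theorem le_horoDist_of_le_add_horoWeight {f : V × ℕ → ENNReal} {p : V × ℕ} (hp : f p = 0)
    (hf : ∀ q r, f r ≤ f q + horoWeight Γ q r) (q : V × ℕ) : f q ≤ horoDist Γ p q := by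
  refine le_iInf₂ fun n c => le_iInf₂ fun h_start h_end => ?_
  rw [← h_end]
  clear h_end
  induction n with
  | zero => simp [h_start, hp]
  | succ n ih =>
    rw [Finset.sum_range_succ]
    exact (hf _ _).trans (by gcongr)

theorem le_add_edist_of_succ {f : ℕ → ENNReal} (h_up : ∀ n, f (n + 1) ≤ f n + 1)
    (h_down : ∀ n, f n ≤ f (n + 1) + 1) (m n : ℕ) : f n ≤ f m + edist m n := by
  have edist_add (a k : ℕ) : edist a (a + k) = k := by
    simp [edist_dist, Nat.dist_eq]
  rcases le_total m n with h | h <;> obtain ⟨k, rfl⟩ := Nat.exists_eq_add_of_le h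
  · rw [edist_add]
    clear h
    induction k with
    | zero => simp
    | succ k ih =>
      calc f (m + k + 1) ≤ f (m + k) + 1 := h_up _
        _ ≤ f m + k + 1 := by gcongr
        _ = f m + (k + 1 : ℕ) := by rw [add_assoc, Nat.cast_succ]
  · rw [edist_comm, edist_add]
    clear h
    induction k with
    | zero => simp
    | succ k ih =>
      calc f n ≤ f (n + k) + k := ih
        _ ≤ f (n + k + 1) + 1 + k := by gcongr; exact h_down _
        _ = f (n + (k + 1)) + (k + 1 : ℕ) := by
          rw [Nat.cast_succ, add_comm (k : ENNReal), add_assoc, add_assoc]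

theorem le_add_length_mul_of_adj {f : V → ENNReal} {c : ENNReal}
    (hf : ∀ a b, Γ.Adj a b → f b ≤ f a + c) {x y : V} (w : Γ.Walk x y) :
    f y ≤ f x + w.length * c := by
  induction w with
  | nil => simp
  | @cons x b y hxb w ih =>
    calc f y ≤ f b + w.length * c := ih
      _ ≤ f x + c + w.length * c := by gcongr; exact hf _ _ hxb
      _ = f x + (w.length + 1 : ℕ) * c := by push_cast; ring

theorem le_add_edist_mul_of_adj {f : V → ENNReal} {c : ENNReal} (hc : c ≠ 0)
    (hf : ∀ a b, Γ.Adj a b → f b ≤ f a + c) (x y : V) :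
    f y ≤ f x + (Γ.edist x y : ENNReal) * c := by
  by_cases hxy : Γ.Reachable x y
  · obtain ⟨w, hw⟩ := hxy.exists_walk_length_eq_edist
    rw [← hw]
    exact le_add_length_mul_of_adj hf w
  · simp [SimpleGraph.edist_eq_top_of_not_reachable hxy, ENNReal.top_mul hc]

theorem horoDist_le_add_edist_height (p : V × ℕ) (v : V) (m n : ℕ) :
    horoDist Γ p (v, n) ≤ horoDist Γ p (v, m) + edist m n := by
  refine le_add_edist_of_succ (f := fun k => horoDist Γ p (v, k)) (fun k => ?_) (fun k => ?_) m n
  · exact horoWeight_succ_right (Γ := Γ) v k ▸ horoDist_le_add_horoWeight p (v, k) (v, k + 1)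
  · exact horoWeight_succ_left (Γ := Γ) v k ▸ horoDist_le_add_horoWeight p (v, k + 1) (v, k)

theorem horoDist_le_add_edist_mul_exp (p : V × ℕ) (x y : V) (h : ℕ) :
    horoDist Γ p (y, h) ≤
      horoDist Γ p (x, h) + (Γ.edist x y : ENNReal) * ENNReal.ofReal (Real.exp (-h)) := by
  refine le_add_edist_mul_of_adj (f := fun v => horoDist Γ p (v, h))
    (ENNReal.ofReal_pos.2 (Real.exp_pos _)).ne' (fun a b hab => ?_) x y
  exact horoWeight_of_adj hab h ▸ horoDist_le_add_horoWeight p (a, h) (b, h)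

variable (Γ) in
/-- The length of the path from `p` to `q` in the horoball that moves vertically from `p` to
height `h`, crosses horizontally there, and moves vertically to `q`. It is infinite when the base
points lie in different components of `Γ`, and `h` may lie below the heights of `p` and `q`. -/
def hatLength (p q : V × ℕ) (h : ℕ) : ENNReal :=
  edist p.2 h + (Γ.edist p.1 q.1 : ENNReal) * ENNReal.ofReal (Real.exp (-h)) + edist h q.2

theorem hatLength_comm (p q : V × ℕ) (h : ℕ) : hatLength Γ p q h = hatLength Γ q p h := by
  simp only [hatLength, edist_comm, SimpleGraph.edist_comm]
  ring

theorem horoDist_le_hatLength (p q : V × ℕ) (h : ℕ) : horoDist Γ p q ≤ hatLength Γ p q h :=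
  calc horoDist Γ p q ≤ horoDist Γ p (q.1, h) + edist h q.2 :=
        horoDist_le_add_edist_height p q.1 h q.2
    _ ≤ horoDist Γ p (p.1, h) + (Γ.edist p.1 q.1 : ENNReal) * ENNReal.ofReal (Real.exp (-h)) +
          edist h q.2 := by
        gcongr
        exact horoDist_le_add_edist_mul_exp p p.1 q.1 h
    _ ≤ hatLength Γ p q h := by
        unfold hatLength
        gcongr
        simpa only [horoDist_self, zero_add] using
          horoDist_le_add_edist_height (Γ := Γ) p p.1 p.2 h

theorem hatLength_max_right_le (p q : V × ℕ) (h : ℕ) :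
    hatLength Γ p q (max h q.2) ≤ hatLength Γ p q h := by
  rcases le_total q.2 h with hq | hq
  · rw [max_eq_left hq]
  · rw [max_eq_right hq]
    unfold hatLength
    rw [edist_self, add_zero, add_right_comm]
    gcongr
    exact edist_triangle _ _ _

theorem hatLength_max_left_le (p q : V × ℕ) (h : ℕ) :
    hatLength Γ p q (max h p.2) ≤ hatLength Γ p q h := by
  simpa only [hatLength_comm p q] using hatLength_max_right_le q p h

theorem hatLength_le_of_vertical (p : V × ℕ) {q r : V × ℕ} (hv : q.1 = r.1)
    (hn : q.2 + 1 = r.2 ∨ r.2 + 1 = q.2) (h : ℕ) :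
    hatLength Γ p r h ≤ hatLength Γ p q h + 1 := by
  have hqr : edist q.2 r.2 = 1 := by
    rcases hn with hn | hn <;> simp [← hn, edist_dist, Nat.dist_eq]
  unfold hatLength
  rw [hv, add_assoc _ (edist h q.2), ← hqr]
  gcongr
  exact edist_triangle _ _ _

theorem hatLength_le_of_adj (p : V × ℕ) {q r : V × ℕ} (hn : q.2 = r.2) (hv : Γ.Adj q.1 r.1)
    {h : ℕ} (hq : q.2 ≤ h) :
    hatLength Γ p r h ≤ hatLength Γ p q h + ENNReal.ofReal (Real.exp (-q.2)) := by
  have h_edist : (Γ.edist p.1 r.1 : ENNReal) ≤ Γ.edist p.1 q.1 + 1 := by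
    have := SimpleGraph.edist_triangle (G := Γ) (u := p.1) (v := q.1) (w := r.1)
    rw [SimpleGraph.edist_eq_one_iff_adj.2 hv] at this
    exact_mod_cast this
  have h_cross : (Γ.edist p.1 r.1 : ENNReal) * ENNReal.ofReal (Real.exp (-h)) ≤
      Γ.edist p.1 q.1 * ENNReal.ofReal (Real.exp (-h)) + ENNReal.ofReal (Real.exp (-q.2)) :=
    calc (Γ.edist p.1 r.1 : ENNReal) * ENNReal.ofReal (Real.exp (-h))
        ≤ (Γ.edist p.1 q.1 + 1) * ENNReal.ofReal (Real.exp (-h)) := by gcongr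
      _ ≤ Γ.edist p.1 q.1 * ENNReal.ofReal (Real.exp (-h)) +
            ENNReal.ofReal (Real.exp (-q.2)) := by
          rw [add_mul, one_mul]
          gcongr
  unfold hatLength
  rw [← hn, add_right_comm _ (edist h q.2), add_assoc (edist p.2 h) _ (ENNReal.ofReal _)]
  gcongr

theorem iInf_hatLength_le_add_horoWeight (p q r : V × ℕ) :
    ⨅ h, hatLength Γ p r h ≤ (⨅ h, hatLength Γ p q h) + horoWeight Γ q r := by
  rw [ENNReal.iInf_add]
  refine le_iInf fun h => ?_
  unfold horoWeight
  split_ifs with h_vert h_horiz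
  · exact iInf_le_of_le h (hatLength_le_of_vertical p h_vert.1 h_vert.2 h)
  -- Below height `q.2` crossing costs more than the edge from `q` to `r`, so first raise `h`.
  · refine iInf_le_of_le (max h q.2) ?_
    exact (hatLength_le_of_adj p h_horiz.1 h_horiz.2 (le_max_right _ _)).trans
      (by gcongr; exact hatLength_max_right_le p q h)
  · simp

theorem horoDist_eq_iInf_hatLength (p q : V × ℕ) :
    horoDist Γ p q = ⨅ h, hatLength Γ p q h := by
  refine le_antisymm (le_iInf (horoDist_le_hatLength p q)) ?_
  refine le_horoDist_of_le_add_horoWeight (f := fun q => ⨅ h, hatLength Γ p q h) ?_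
    (iInf_hatLength_le_add_horoWeight p) q
  exact nonpos_iff_eq_zero.1 (iInf_le_of_le p.2 (by simp [hatLength]))

theorem iInf_hatLength_eq_iInf_max_add (p q : V × ℕ) :
    ⨅ h, hatLength Γ p q h = ⨅ t, hatLength Γ p q (max p.2 q.2 + t) := by
  refine le_antisymm (le_iInf fun t => iInf_le _ _) (le_iInf fun h => ?_)
  have h_eq : max p.2 q.2 + (h - max p.2 q.2) = max (max h q.2) p.2 := by omega
  refine iInf_le_of_le (h - max p.2 q.2) ?_
  rw [h_eq]
  exact (hatLength_max_left_le p q _).trans (hatLength_max_right_le p q h)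

theorem hatLength_max_add {x y : V} (hxy : Γ.Reachable x y) (m n t : ℕ) :
    hatLength Γ (x, m) (y, n) (max m n + t) =
      ENNReal.ofReal (|(m : ℝ) - n| +
        (2 * t + Γ.dist x y * Real.exp (-(max (m : ℝ) n)) * Real.exp (-t))) := by
  have h_edist : (Γ.edist x y : ENNReal) = ENNReal.ofReal (Γ.dist x y) := by
    rw [ENNReal.ofReal_natCast, ← hxy.coe_dist_eq_edist, ENat.toENNReal_coe]
  unfold hatLength
  rw [h_edist, edist_dist, edist_dist, ← ENNReal.ofReal_mul (by positivity),
    ← ENNReal.ofReal_add (by positivity) (by positivity),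
    ← ENNReal.ofReal_add (by positivity) (by positivity), Nat.dist_eq, Nat.dist_eq]
  congr 1
  push_cast
  rw [neg_add, Real.exp_add, ← mul_assoc, abs_sub_comm (m : ℝ) (max _ _ + _),
    abs_of_nonneg (by linarith [le_max_left (m : ℝ) n, Nat.cast_nonneg (α := ℝ) t]),
    abs_of_nonneg (by linarith [le_max_right (m : ℝ) n, Nat.cast_nonneg (α := ℝ) t])]
  linarith [max_sub_min_eq_abs' (m : ℝ) n, max_add_min (m : ℝ) n]

theorem toReal_horoDist {x y : V} (hxy : Γ.Reachable x y) (m n : ℕ) :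
    (horoDist Γ (x, m) (y, n)).toReal =
      |(m : ℝ) - n| +
        ⨅ t : ℕ, (2 * (t : ℝ) + Γ.dist x y * Real.exp (-(max (m : ℝ) n)) * Real.exp (-t)) := by
  have h_bdd : BddBelow (Set.range fun t : ℕ =>
      2 * (t : ℝ) + Γ.dist x y * Real.exp (-(max (m : ℝ) n)) * Real.exp (-t)) :=
    ⟨0, Set.forall_mem_range.2 fun t => by positivity⟩
  rw [horoDist_eq_iInf_hatLength, iInf_hatLength_eq_iInf_max_add]
  simp only [hatLength_max_add hxy]
  rw [ENNReal.toReal_iInf fun _ => ENNReal.ofReal_ne_top, add_ciInf h_bdd]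
  exact iInf_congr fun t => ENNReal.toReal_ofReal (by positivity)

end

theorem two_mul_log_add_one_sub_one_le {s t : ℝ} (hs : 0 ≤ s) (ht : 0 ≤ t) :
    2 * Real.log (s + 1) - 1 ≤ 2 * t + s * Real.exp (-t) := by
  set u := s * Real.exp (-t) with hu
  have : 0 ≤ u := by positivity
  have h_factor : s + 1 ≤ Real.exp t * (2 * ((u + 1) / 2)) := by
    have : Real.exp t * u = s := by rw [hu, mul_left_comm, ← Real.exp_add]; simp
    linarith [Real.one_le_exp ht]
  have h_log : Real.log (s + 1) ≤ t + (Real.log 2 + Real.log ((u + 1) / 2)) := by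
    rw [← Real.log_mul two_ne_zero (by positivity)]
    nth_rw 1 [← Real.log_exp t]
    rw [← Real.log_mul (by positivity) (by positivity)]
    exact Real.log_le_log (by positivity) h_factor
  have h_tangent : Real.log ((u + 1) / 2) ≤ (u + 1) / 2 - 1 :=
    Real.log_le_sub_one_of_pos (by positivity)
  linarith [Real.log_two_lt_d9]

theorem two_mul_floor_log_add_mul_exp_le {s : ℝ} (hs : 0 ≤ s) :
    2 * (⌊Real.log (s + 1)⌋₊ : ℝ) + s * Real.exp (-⌊Real.log (s + 1)⌋₊) ≤
      2 * Real.log (s + 1) + 3 := by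
  set t : ℕ := ⌊Real.log (s + 1)⌋₊
  have ht : (t : ℝ) ≤ Real.log (s + 1) := Nat.floor_le (Real.log_nonneg (by linarith))
  have h_exp : s + 1 ≤ Real.exp (t + 1) :=
    (Real.log_le_iff_le_exp (by positivity)).1 (Nat.lt_floor_add_one _).le
  have h_cross : s * Real.exp (-t) ≤ 3 :=
    calc s * Real.exp (-t) ≤ Real.exp (t + 1) * Real.exp (-t) := by gcongr; linarith
      _ = Real.exp 1 := by rw [← Real.exp_add]; ring_nf
      _ ≤ 3 := Real.exp_one_lt_three.le
  linarith

theorem abs_iInf_two_mul_add_mul_exp_sub_le {s : ℝ} (hs : 0 ≤ s) :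
    |(⨅ t : ℕ, (2 * (t : ℝ) + s * Real.exp (-t))) - 2 * Real.log (s + 1)| ≤ 3 := by
  have h_lower : 2 * Real.log (s + 1) - 1 ≤ ⨅ t : ℕ, (2 * (t : ℝ) + s * Real.exp (-t)) :=
    le_ciInf fun t => two_mul_log_add_one_sub_one_le hs t.cast_nonneg
  have h_upper : ⨅ t : ℕ, (2 * (t : ℝ) + s * Real.exp (-t)) ≤ 2 * Real.log (s + 1) + 3 :=
    ciInf_le_of_le ⟨0, Set.forall_mem_range.2 fun t => by positivity⟩ _
      (two_mul_floor_log_add_mul_exp_le hs)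
  rw [abs_le]
  constructor <;> linarith

theorem combinatorial_horoball_distance_estimate_general {V : Type*} {Γ : SimpleGraph V} {x y : V}
    (hxy : Γ.Reachable x y) (m n : ℕ) :
    |(horoDist Γ (x, m) (y, n)).toReal -
        (2 * Real.log ((Γ.dist x y : ℝ) * Real.exp (-(max (m : ℝ) (n : ℝ))) + 1) +
          |(m : ℝ) - (n : ℝ)|)| ≤ 3 := by
  rw [toReal_horoDist hxy, add_comm (2 * _), add_sub_add_left_eq_sub]
  exact abs_iInf_two_mul_add_mul_exp_sub_le (by positivity)

/-- **Lemma 3.2.** There is a universal constant `K` such that for every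
connected graph `Γ` (with unit edge lengths and path metric `Γ.dist`), the
path metric `d_ℋ` on the combinatorial horoball `ℋ(Γ)` satisfies
`|d_ℋ((x,m),(y,n)) - (2 log(d_Γ(x,y) e^{-max(m,n)} + 1) + |m-n|)| ≤ K`. -/
theorem combinatorial_horoball_distance_estimate :
    ∃ K : ℝ, 0 < K ∧
      ∀ (V : Type u) (Γ : SimpleGraph V), Γ.Connected →
        ∀ (x y : V) (m n : ℕ),
          |(horoDist Γ (x, m) (y, n)).toReal -
              (2 * Real.log ((Γ.dist x y : ℝ) * Real.exp (-(max (m : ℝ) (n : ℝ))) + 1) +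
                |(m : ℝ) - (n : ℝ)|)| ≤ K :=
  ⟨3, by norm_num, fun _ _ hΓ x y m n =>
    combinatorial_horoball_distance_estimate_general (hΓ x y) m n⟩

end RelHypPaper
end
end
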